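/- arXiv:0807.1972 — 6 statements merged into one kernel-verified Lean document; each statement's English description precedes it below -/
import Mathlib

section
/- Fix v with 0 ≤ v < 1 and λ ∈ ℂ; set γ = (1 − v²)^{−1/2} and, for y ∈ ℝ³, ỹ = (γy₁, y₂, y₃), and define g(y) = γ·exp(−γλ(|ỹ| + v·ỹ₁))/(4π|ỹ|). Then for every y ≠ 0 the function g is smooth near y and satisfies −(Δg)(y) + λ²·g(y) − 2λv·(∂₁g)(y) + v²·(∂₁²g)(y) = 0, i.e. g solves (−Δ + (λ − v∂₁)²)g = 0 away from the origin. -/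
/-- The partial derivative in the `i`-th coordinate direction of a complex-valued
function on `ℝ³`. -/
noncomputable def pd (i : Fin 3) (f : (Fin 3 → ℝ) → ℂ) : (Fin 3 → ℝ) → ℂ :=
  fun x => fderiv ℝ f x (Pi.single i 1)

theorem pd_eq_of_line (i : Fin 3) (f : (Fin 3 → ℝ) → ℂ) (y : Fin 3 → ℝ) (d : ℂ)
    (hf : DifferentiableAt ℝ f y) (h : HasLineDerivAt ℝ f d y (Pi.single i 1)) :
    pd i f y = d := by
  unfold pd
  rw [← hf.lineDeriv_eq_fderiv]
  exact h.lineDeriv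

/-- the squared modified radius -/
noncomputable def qf (a : Fin 3 → ℝ) (y : Fin 3 → ℝ) : ℝ :=
  a 0 * y 0 ^ 2 + a 1 * y 1 ^ 2 + a 2 * y 2 ^ 2

/-- the modified radius -/
noncomputable def rf (a : Fin 3 → ℝ) (y : Fin 3 → ℝ) : ℂ := ((Real.sqrt (qf a y) : ℝ) : ℂ)

theorem qf_pos (a : Fin 3 → ℝ) (ha : ∀ i, 0 < a i) (y : Fin 3 → ℝ) (hy : y ≠ 0) : 0 < qf a y := by
  have h0 := mul_nonneg (ha 0).le (sq_nonneg (y 0))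
  have h1 := mul_nonneg (ha 1).le (sq_nonneg (y 1))
  have h2 := mul_nonneg (ha 2).le (sq_nonneg (y 2))
  obtain ⟨i, hi⟩ := Function.ne_iff.mp hy
  have := mul_pos (ha i) (pow_pos (abs_pos.mpr hi) 2)
  rw [sq_abs] at this
  unfold qf
  fin_cases i <;> simp at this <;> linarith

theorem rf_ne (a : Fin 3 → ℝ) (y : Fin 3 → ℝ) (h : 0 < qf a y) : rf a y ≠ 0 := by
  unfold rf
  exact_mod_cast (Real.sqrt_pos.mpr h).ne'

theorem rf_sq (a : Fin 3 → ℝ) (y : Fin 3 → ℝ) (h : 0 < qf a y) :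
    rf a y ^ 2 = (a 0 : ℂ) * (y 0 : ℂ) ^ 2 + a 1 * (y 1 : ℂ) ^ 2 + a 2 * (y 2 : ℂ) ^ 2 := by
  unfold rf
  have := Real.sq_sqrt h.le
  have h2 : (((Real.sqrt (qf a y)) ^ 2 : ℝ) : ℂ) = ((qf a y : ℝ) : ℂ) := by rw [this]
  rw [← Complex.ofReal_pow, h2]
  unfold qf
  push_cast
  ring

theorem rf_contDiffAt (a : Fin 3 → ℝ) (y : Fin 3 → ℝ) (h : 0 < qf a y) :
    ContDiffAt ℝ (⊤ : ℕ∞) (rf a) y := by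
  have hq : ContDiff ℝ (⊤ : ℕ∞) (qf a) := by unfold qf; fun_prop
  have h1 : ContDiffAt ℝ (⊤ : ℕ∞) (fun y => Real.sqrt (qf a y)) y :=
    hq.contDiffAt.sqrt h.ne'
  exact Complex.ofRealCLM.contDiff.contDiffAt.comp y h1

theorem coord_line (i j : Fin 3) (y : Fin 3 → ℝ) :
    HasDerivAt (fun t : ℝ => (y + t • (Pi.single i 1 : Fin 3 → ℝ)) j)
      (if j = i then 1 else 0) 0 := by
  have := ((hasDerivAt_id (0:ℝ)).mul_const ((Pi.single i 1 : Fin 3 → ℝ) j)).const_add (y j)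
  simpa [Pi.single_apply] using this

theorem rf_line (a : Fin 3 → ℝ) (i : Fin 3) (y : Fin 3 → ℝ) (h : 0 < qf a y) :
    HasDerivAt (fun t : ℝ => rf a (y + t • (Pi.single i 1 : Fin 3 → ℝ)))
      (a i * y i / rf a y) 0 := by
  have hq : HasDerivAt (fun t : ℝ => qf a (y + t • (Pi.single i 1 : Fin 3 → ℝ)))
      (2 * (a i * y i)) 0 := by
    have := ((((coord_line i 0 y).pow 2).const_mul (a 0)).add
      (((coord_line i 1 y).pow 2).const_mul (a 1))).add
      (((coord_line i 2 y).pow 2).const_mul (a 2))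
    refine HasDerivAt.congr_deriv this ?_
    fin_cases i <;> simp [mul_left_comm]
  have h2 := (hq.sqrt (by simpa using h.ne')).ofReal_comp
  refine HasDerivAt.congr_deriv h2 ?_
  unfold rf
  simp only [zero_smul, add_zero]
  push_cast
  rw [mul_div_mul_left _ _ two_ne_zero]

/-- the function -/
noncomputable def gf (a : Fin 3 → ℝ) (C m n : ℂ) (y : Fin 3 → ℝ) : ℂ :=
  C * Complex.exp (m * rf a y + n * (y 0 : ℂ)) / rf a y

/-- the logarithmic derivative -/
noncomputable def hf (a : Fin 3 → ℝ) (m n : ℂ) (i : Fin 3) (y : Fin 3 → ℝ) : ℂ :=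
  m * (a i * (y i : ℂ) / rf a y) + n * (if 0 = i then 1 else 0) - a i * (y i : ℂ) / rf a y ^ 2

theorem coordC (j : Fin 3) (y : Fin 3 → ℝ) :
    ContDiffAt ℝ (⊤ : ℕ∞) (fun y : Fin 3 → ℝ => (y j : ℂ)) y :=
  (Complex.ofRealCLM.contDiff.comp (contDiff_apply ℝ ℝ j)).contDiffAt

theorem gf_contDiffAt (a : Fin 3 → ℝ) (C m n : ℂ) (y : Fin 3 → ℝ) (h : 0 < qf a y) :
    ContDiffAt ℝ (⊤ : ℕ∞) (gf a C m n) y := by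
  have h1 := rf_contDiffAt a y h
  have h2 := coordC 0 y
  exact (contDiffAt_const.mul
    ((contDiffAt_const.mul h1).add (contDiffAt_const.mul h2)).cexp).mul (h1.inv (rf_ne a y h))

theorem hf_contDiffAt (a : Fin 3 → ℝ) (m n : ℂ) (i : Fin 3) (y : Fin 3 → ℝ) (h : 0 < qf a y) :
    ContDiffAt ℝ (⊤ : ℕ∞) (hf a m n i) y := by
  have h1 := rf_contDiffAt a y h
  have h2 := coordC i y
  exact ((contDiffAt_const.mul ((contDiffAt_const.mul h2).mul (h1.inv (rf_ne a y h)))).add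
    contDiffAt_const).sub ((contDiffAt_const.mul h2).mul ((h1.pow 2).inv (pow_ne_zero 2 (rf_ne a y h))))

theorem gf_line (a : Fin 3 → ℝ) (C m n : ℂ) (i : Fin 3) (y : Fin 3 → ℝ) (h : 0 < qf a y) :
    HasDerivAt (fun t : ℝ => gf a C m n (y + t • (Pi.single i 1 : Fin 3 → ℝ)))
      (gf a C m n y * hf a m n i y) 0 := by
  have h1 := rf_line a i y h
  have h2 := (coord_line i 0 y).ofReal_comp
  have hr := rf_ne a y h
  have := ((((h1.const_mul m).add (h2.const_mul n)).cexp).const_mul C).div h1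
    (by simpa using hr)
  refine HasDerivAt.congr_deriv this ?_
  simp only [zero_smul, add_zero, gf, hf, Pi.add_apply, Pi.zero_apply,
    apply_ite Complex.ofReal, Complex.ofReal_one, Complex.ofReal_zero]
  field_simp

theorem hf_line (a : Fin 3 → ℝ) (m n : ℂ) (i : Fin 3) (y : Fin 3 → ℝ) (h : 0 < qf a y) :
    HasDerivAt (fun t : ℝ => hf a m n i (y + t • (Pi.single i 1 : Fin 3 → ℝ)))
      (m * (a i / rf a y - a i ^ 2 * y i ^ 2 / rf a y ^ 3) - a i / rf a y ^ 2
        + 2 * a i ^ 2 * y i ^ 2 / rf a y ^ 4) 0 := by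
  have h1 := rf_line a i y h
  have h2 := ((coord_line i i y).ofReal_comp).const_mul (a i : ℂ)
  have hr := rf_ne a y h
  have := (((h2.div h1 (by simpa using hr)).const_mul m).add_const
    (n * (if 0 = i then 1 else 0))).sub
    (h2.div (h1.pow 2) (by simpa using hr))
  refine HasDerivAt.congr_deriv this ?_
  simp only [zero_smul, add_zero, if_true, Pi.pow_apply]
  push_cast
  field_simp
  ring

theorem pd_gf (a : Fin 3 → ℝ) (C m n : ℂ) (i : Fin 3) (y : Fin 3 → ℝ) (h : 0 < qf a y) :
    pd i (gf a C m n) y = gf a C m n y * hf a m n i y :=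
  pd_eq_of_line _ _ _ _ ((gf_contDiffAt a C m n y h).differentiableAt (by simp))
    (gf_line a C m n i y h)

theorem pd_pd_gf (a : Fin 3 → ℝ) (C m n : ℂ) (i : Fin 3) (y : Fin 3 → ℝ) (h : 0 < qf a y) :
    pd i (pd i (gf a C m n)) y = gf a C m n y * (hf a m n i y ^ 2 +
      (m * (a i / rf a y - a i ^ 2 * y i ^ 2 / rf a y ^ 3) - a i / rf a y ^ 2
        + 2 * a i ^ 2 * y i ^ 2 / rf a y ^ 4)) := by
  have hq : Continuous (qf a) := by unfold qf; fun_prop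
  have ev : pd i (gf a C m n) =ᶠ[nhds y] fun y => gf a C m n y * hf a m n i y := by
    filter_upwards [hq.continuousAt.eventually (lt_mem_nhds h)] with z hz
    exact pd_gf a C m n i z hz
  have e1 : pd i (pd i (gf a C m n)) y = pd i (fun y => gf a C m n y * hf a m n i y) y := by
    show fderiv ℝ (pd i (gf a C m n)) y _ = fderiv ℝ _ y _
    rw [ev.fderiv_eq]
  rw [e1]
  apply pd_eq_of_line
  · exact ((gf_contDiffAt a C m n y h).differentiableAt (by simp)).mul
      ((hf_contDiffAt a m n i y h).differentiableAt (by simp))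
  · have := (gf_line a C m n i y h).mul (hf_line a m n i y h)
    unfold HasLineDerivAt
    refine HasDerivAt.congr_deriv this ?_
    simp only [zero_smul, add_zero]
    ring

theorem final_algebra (c v L X Y Z p m n : ℂ) (hm : m = -c * L) (hn : n = -c ^ 2 * v * L)
    (h2 : p ^ 2 * (c ^ 2 * X ^ 2 + Y ^ 2 + Z ^ 2) = 1) (h1 : c ^ 2 * (1 - v ^ 2) = 1) :
    -((1 - v ^ 2) * ((m * (c ^ 2 * X * p) + n - c ^ 2 * X * p ^ 2) ^ 2
        + (m * (c ^ 2 * p - c ^ 4 * X ^ 2 * p ^ 3) - c ^ 2 * p ^ 2 + 2 * c ^ 4 * X ^ 2 * p ^ 4))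
      + ((m * (Y * p) - Y * p ^ 2) ^ 2
        + (m * (p - Y ^ 2 * p ^ 3) - p ^ 2 + 2 * Y ^ 2 * p ^ 4))
      + ((m * (Z * p) - Z * p ^ 2) ^ 2
        + (m * (p - Z ^ 2 * p ^ 3) - p ^ 2 + 2 * Z ^ 2 * p ^ 4)))
      + L ^ 2 - 2 * L * v * (m * (c ^ 2 * X * p) + n - c ^ 2 * X * p ^ 2) = 0 := by
  subst hm hn
  linear_combination (-(c ^ 2 * X ^ 2 * p ^ 2 * ((-c * L) ^ 2 - 3 * (-c * L) * p + 3 * p ^ 2))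
    - ((-c * L) * p - p ^ 2) - 2 * X * (-c ^ 2 * v * L) * ((-c * L) * p - p ^ 2)
    - c ^ 2 * v ^ 2 * L ^ 2 - L ^ 2) * h1
    - ((-c * L) ^ 2 - 3 * (-c * L) * p + 3 * p ^ 2) * h2

/-- For `0 ≤ v < 1`, `γ = (1-v²)^{-1/2}`, `ỹ = (γy₁, y₂, y₃)`, the function
`g(y) = γ · exp(-γλ(|ỹ| + v·ỹ₁)) / (4π|ỹ|)` is smooth away from the origin and
satisfies `(-Δ + (λ - v∂₁)²) g = 0` there. -/
theorem fundamental_solution_solves_equation (v : ℝ) (hv0 : 0 ≤ v) (hv1 : v < 1)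
    (lam : ℂ) (g : (Fin 3 → ℝ) → ℂ)
    (hg : ∀ y : Fin 3 → ℝ,
      g y = ((1 / Real.sqrt (1 - v ^ 2) : ℝ) : ℂ) *
        Complex.exp (-((1 / Real.sqrt (1 - v ^ 2) : ℝ) : ℂ) * lam *
          (((Real.sqrt (((1 / Real.sqrt (1 - v ^ 2)) * y 0) ^ 2 + (y 1) ^ 2 + (y 2) ^ 2) : ℝ) : ℂ)
            + ((v : ℝ) : ℂ) * (((1 / Real.sqrt (1 - v ^ 2)) * y 0 : ℝ) : ℂ))) /
        ((4 * Real.pi *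
          Real.sqrt (((1 / Real.sqrt (1 - v ^ 2)) * y 0) ^ 2 + (y 1) ^ 2 + (y 2) ^ 2) : ℝ) : ℂ)) :
    ∀ y : Fin 3 → ℝ, y ≠ 0 →
      ContDiffAt ℝ (⊤ : ℕ∞) g y ∧
      -(pd 0 (pd 0 g) y + pd 1 (pd 1 g) y + pd 2 (pd 2 g) y) + lam ^ 2 * g y
        - 2 * lam * ((v : ℝ) : ℂ) * pd 0 g y + ((v : ℝ) : ℂ) ^ 2 * pd 0 (pd 0 g) y = 0 := by
  intro y hy
  have hpos : 0 < 1 - v ^ 2 := by nlinarith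
  obtain ⟨c, hc⟩ : ∃ c : ℝ, c = 1 / Real.sqrt (1 - v ^ 2) := ⟨_, rfl⟩
  rw [← hc] at hg
  have hc0 : 0 < c := by rw [hc]; exact one_div_pos.mpr (Real.sqrt_pos.mpr hpos)
  have hc1 : c ^ 2 * (1 - v ^ 2) = 1 := by
    rw [hc, div_pow, Real.sq_sqrt hpos.le]
    field_simp
  obtain ⟨a, ha⟩ : ∃ a : Fin 3 → ℝ, a = ![c ^ 2, 1, 1] := ⟨_, rfl⟩
  have a0 : a 0 = c ^ 2 := by rw [ha]; rfl
  have a1 : a 1 = 1 := by rw [ha]; rfl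
  have a2 : a 2 = 1 := by rw [ha]; rfl
  have hapos : ∀ i, 0 < a i := by
    intro i
    fin_cases i
    · show 0 < a 0
      rw [a0]; positivity
    · show 0 < a 1
      rw [a1]; positivity
    · show 0 < a 2
      rw [a2]; positivity
  have hq := qf_pos a hapos y hy
  have hgf : g = gf a ((c : ℂ) / (4 * Real.pi)) (-c * lam) (-c ^ 2 * v * lam) := by
    funext z
    rw [hg z]
    have e : (c * z 0) ^ 2 + z 1 ^ 2 + z 2 ^ 2 = qf a z := by
      unfold qf; rw [a0, a1, a2]; ring
    rw [e]
    unfold gf rf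
    push_cast
    have e2 : -(c : ℂ) * lam * ((Real.sqrt (qf a z) : ℝ) + v * (c * z 0)) =
      -c * lam * (Real.sqrt (qf a z) : ℝ) + -c ^ 2 * v * lam * z 0 := by ring
    rw [e2, div_mul_eq_mul_div, div_div]
  rw [hgf]
  refine ⟨gf_contDiffAt _ _ _ _ _ hq, ?_⟩
  simp only [pd_pd_gf _ _ _ _ _ _ hq, pd_gf _ _ _ _ _ _ hq]
  have hr := rf_ne a y hq
  have hr2 := rf_sq a y hq
  have hc1' : (c : ℂ) ^ 2 * (1 - (v : ℂ) ^ 2) = 1 := by exact_mod_cast hc1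
  have key := final_algebra c v lam (y 0) (y 1) (y 2) (rf a y)⁻¹ _ _ rfl rfl
    (by
      rw [a0, a1, a2] at hr2
      push_cast at hr2
      rw [one_mul, one_mul] at hr2
      rw [← hr2]
      field_simp) hc1'
  unfold hf
  rw [a0, a1, a2]
  simp only [if_true, if_neg (show ¬ ((0 : Fin 3) = 1) by decide),
    if_neg (show ¬ ((0 : Fin 3) = 2) by decide)]
  push_cast
  linear_combination (gf a ((c : ℂ) / (4 * Real.pi)) (-c * lam) (-c ^ 2 * v * lam) y) * key
end

section
/- Fix v with 0 ≤ v < 1 and λ ∈ ℂ with Re λ > 0; set γ = (1 − v²)^{−1/2} and, for y ∈ ℝ³, ỹ = (γy₁, y₂, y₃), and define g(y) = γ·exp(−γλ(|ỹ| + v·ỹ₁))/(4π|ỹ|). Then g is Lebesgue integrable on ℝ³ and for every k ∈ ℝ³ one has ∫_{ℝ³} g(y)·exp(i⟨k, y⟩) dy = 1/(|k|² + (λ + i·k₁·v)²). -/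
open MeasureTheory

lemma aux_int_E {c : ℝ} (hc : 0 < c) :
    Integrable (fun q : ℝ × ℂ => Real.exp (-c * √(q.1 ^ 2 + ‖q.2‖ ^ 2)) / √(q.1 ^ 2 + ‖q.2‖ ^ 2)) := by
  have h := (WithLp.volume_preserving_symm_measurableEquiv_toLp_prod ℝ ℂ).integrable_comp_emb
    (MeasurableEquiv.toLp 2 (ℝ × ℂ)).symm.measurableEmbedding
    (g := fun q : ℝ × ℂ => Real.exp (-c * √(q.1 ^ 2 + ‖q.2‖ ^ 2)) / √(q.1 ^ 2 + ‖q.2‖ ^ 2))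
  rw [← h]
  have hd : Module.finrank ℝ (WithLp 2 (ℝ × ℂ)) = 3 := by
    rw [(WithLp.linearEquiv 2 ℝ (ℝ × ℂ)).finrank_eq]
    simp
  have h2 : Integrable (fun x : WithLp 2 (ℝ × ℂ) => (fun r : ℝ => Real.exp (-c * r) / r) ‖x‖) := by
    refine (integrable_fun_norm_addHaar (volume : Measure (WithLp 2 (ℝ × ℂ)))
      (f := fun r : ℝ => Real.exp (-c * r) / r)).2 ?_
    rw [hd]
    have := integrableOn_rpow_mul_exp_neg_mul_rpow (s := 1) (p := 1) (by norm_num) (by norm_num) hc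
    refine this.congr_fun (fun y hy => ?_) measurableSet_Ioi
    have hy : y ≠ 0 := ne_of_gt hy
    simp
    field_simp
  refine h2.congr (Filter.Eventually.of_forall fun x => ?_)
  simp [WithLp.prod_norm_eq_of_L2]

lemma aux_radial {m : ℂ} (hm : 0 < m.re) {x : ℝ} (hx : x ≠ 0) :
    ∫ p : ℂ, Complex.exp (-m * (√(x ^ 2 + ‖p‖ ^ 2) : ℝ)) / ((4 * Real.pi * √(x ^ 2 + ‖p‖ ^ 2) : ℝ) : ℂ)
      = Complex.exp (-m * (|x| : ℝ)) / (2 * m) := by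
  have hm0 : m ≠ 0 := by rintro rfl; simp at hm
  have h := integral_fun_norm_addHaar (volume : Measure ℂ)
    (fun r => Complex.exp (-m * (√(x ^ 2 + r ^ 2) : ℝ)) / ((4 * Real.pi * √(x ^ 2 + r ^ 2) : ℝ) : ℂ))
  rw [h]
  have hpos : ∀ r : ℝ, 0 < x ^ 2 + r ^ 2 := fun r => by positivity
  have key : ∫ y in Set.Ioi (0:ℝ), y ^ (Module.finrank ℝ ℂ - 1) • (Complex.exp (-m * (√(x ^ 2 + y ^ 2) : ℝ)) / ((4 * Real.pi * √(x ^ 2 + y ^ 2) : ℝ) : ℂ)) = 0 - (- Complex.exp (-m * (√(x ^ 2 + 0 ^ 2) : ℝ)) / (4 * Real.pi * m)) := by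
    refine integral_Ioi_of_hasDerivAt_of_tendsto' (f := fun y : ℝ => - Complex.exp (-m * (√(x ^ 2 + y ^ 2) : ℝ)) / (4 * Real.pi * m)) ?_ ?_ ?_
    · intro y _
      have h1 : HasDerivAt (fun y : ℝ => √(x ^ 2 + y ^ 2)) (y / √(x ^ 2 + y ^ 2)) y := by
        have := (((hasDerivAt_id y).pow 2).const_add (x ^ 2)).sqrt (hpos y).ne'
        refine this.congr_deriv ?_
        simp; field_simp
      have h2 := ((h1.ofReal_comp.const_mul (-m)).cexp.neg).div_const (4 * Real.pi * m)
      refine h2.congr_deriv ?_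
      have : ((√(x ^ 2 + y ^ 2) : ℝ) : ℂ) ≠ 0 := by
        exact_mod_cast (Real.sqrt_pos.2 (hpos y)).ne'
      have hpi : (Real.pi : ℂ) ≠ 0 := by exact_mod_cast Real.pi_ne_zero
      simp
      field_simp
    · have hi := (exp_neg_integrableOn_Ioi 0 hm)
      refine Integrable.mono' hi ?_ ?_
      · apply Continuous.aestronglyMeasurable
        have : ∀ r : ℝ, ((4 * Real.pi * √(x ^ 2 + r ^ 2) : ℝ) : ℂ) ≠ 0 := fun r => by
          have := Real.sqrt_pos.2 (hpos r)
          have hpi := Real.pi_pos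
          exact_mod_cast (by positivity : 4 * Real.pi * √(x ^ 2 + r ^ 2) ≠ 0)
        fun_prop (disch := assumption)
      · refine (ae_restrict_iff' measurableSet_Ioi).2 (Filter.Eventually.of_forall fun y hy => ?_)
        have hy : 0 < y := hy
        have hs := Real.sqrt_pos.2 (hpos y)
        have hle : y ≤ √(x ^ 2 + y ^ 2) := Real.le_sqrt_of_sq_le (by nlinarith [sq_nonneg x])
        have hpi := Real.pi_gt_three
        rw [norm_smul, norm_div, Complex.norm_exp, Complex.norm_real, Real.norm_of_nonneg (by positivity : 0 ≤ 4 * Real.pi * √(x ^ 2 + y ^ 2))]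
        simp only [Complex.finrank_real_complex]
        rw [Real.norm_of_nonneg (by positivity)]
        have e1 : (-m * (√(x ^ 2 + y ^ 2) : ℝ)).re = - m.re * √(x ^ 2 + y ^ 2) := by simp
        rw [e1]
        have e2 : Real.exp (- m.re * √(x ^ 2 + y ^ 2)) ≤ Real.exp (-m.re * y) := by
          apply Real.exp_le_exp.2; nlinarith
        rw [← mul_div_assoc, div_le_iff₀ (by positivity)]
        have := Real.exp_pos (-m.re * y)
        calc y ^ (2 - 1) * Real.exp (-m.re * √(x ^ 2 + y ^ 2)) ≤ √(x ^ 2 + y ^ 2) * Real.exp (-m.re * y) := by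
              norm_num; gcongr
          _ ≤ _ := by nlinarith [mul_pos hs this]
    · have : Filter.Tendsto (fun y : ℝ => Complex.exp (-m * (√(x ^ 2 + y ^ 2) : ℝ))) Filter.atTop (nhds 0) := by
        rw [Complex.tendsto_exp_nhds_zero_iff]
        have : Filter.Tendsto (fun y : ℝ => √(x ^ 2 + y ^ 2)) Filter.atTop Filter.atTop := by
          refine Filter.tendsto_atTop_mono (fun y => Real.le_sqrt_of_sq_le (by nlinarith [sq_nonneg x] : y ^ 2 ≤ _)) Filter.tendsto_id
        have := this.const_mul_atTop_of_neg (neg_neg_iff_pos.2 hm)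
        simpa using this
      simpa using this.neg.div_const (4 * Real.pi * m)
  rw [key]
  have hpi : (Real.pi : ℂ) ≠ 0 := by exact_mod_cast Real.pi_ne_zero
  simp [Measure.real, Complex.volume_ball, Real.sqrt_sq_eq_abs]
  field_simp
  ring

lemma aux_1d {m : ℂ} (hm : 0 < m.re) (κ : ℝ) :
    ∫ x : ℝ, Complex.exp (-m * (|x| : ℝ)) / (2 * m) * Complex.exp (Complex.I * ((κ * x : ℝ) : ℂ))
      = 1 / (κ ^ 2 + m ^ 2) := by
  have hm0 : m ≠ 0 := by rintro rfl; simp at hm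
  have ha : (-m + Complex.I * κ).re < 0 := by simpa using hm
  have hb : 0 < (m + Complex.I * κ).re := by simpa using hm
  have ha0 : (-m + Complex.I * κ) ≠ 0 := by intro h; rw [h] at ha; simp at ha
  have hb0 : (m + Complex.I * κ) ≠ 0 := by intro h; rw [h] at hb; simp at hb
  have e1 : Set.EqOn (fun x : ℝ => Complex.exp (-m * (|x| : ℝ)) / (2 * m) * Complex.exp (Complex.I * ((κ * x : ℝ) : ℂ)))
      (fun x : ℝ => 1 / (2 * m) * Complex.exp ((-m + Complex.I * κ) * x)) (Set.Ioi 0) := by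
    intro x hx
    simp only [abs_of_pos (show 0 < x from hx)]
    rw [div_mul_eq_mul_div, ← Complex.exp_add, div_eq_mul_one_div, mul_comm]
    congr 2; push_cast; ring
  have e2 : Set.EqOn (fun x : ℝ => Complex.exp (-m * (|x| : ℝ)) / (2 * m) * Complex.exp (Complex.I * ((κ * x : ℝ) : ℂ)))
      (fun x : ℝ => 1 / (2 * m) * Complex.exp ((m + Complex.I * κ) * x)) (Set.Iic 0) := by
    intro x hx
    simp only [abs_of_nonpos (show x ≤ 0 from hx)]
    rw [div_mul_eq_mul_div, ← Complex.exp_add, div_eq_mul_one_div, mul_comm]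
    congr 2; push_cast; ring
  rw [← intervalIntegral.integral_Iic_add_Ioi (b := 0)
    (IntegrableOn.congr_fun ((integrableOn_exp_mul_complex_Iic hb 0).const_mul (1 / (2 * m))) e2.symm measurableSet_Iic)
    (IntegrableOn.congr_fun ((integrableOn_exp_mul_complex_Ioi ha 0).const_mul (1 / (2 * m))) e1.symm measurableSet_Ioi),
    setIntegral_congr_fun measurableSet_Iic e2, setIntegral_congr_fun measurableSet_Ioi e1,
    integral_const_mul, integral_const_mul, integral_exp_mul_complex_Iic hb,
    integral_exp_mul_complex_Ioi ha]
  have hden : (κ : ℂ) ^ 2 + m ^ 2 = - ((m + Complex.I * κ) * (-m + Complex.I * κ)) := by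
    ring_nf; simp
  rw [hden]
  simp
  field_simp
  ring

/-- Yukawa kernel on `ℝ × ℂ`. -/
noncomputable def yuk (m : ℂ) (q : ℝ × ℂ) : ℂ :=
  Complex.exp (-m * (√(q.1 ^ 2 + ‖q.2‖ ^ 2) : ℝ)) / ((4 * Real.pi * √(q.1 ^ 2 + ‖q.2‖ ^ 2) : ℝ) : ℂ)

lemma yuk_meas (m : ℂ) : Measurable (yuk m) := by
  unfold yuk
  fun_prop

lemma yuk_int {m : ℂ} (hm : 0 < m.re) : Integrable (yuk m) := by
  refine Integrable.mono' (aux_int_E hm) (yuk_meas m).aestronglyMeasurable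
    (Filter.Eventually.of_forall fun q => ?_)
  unfold yuk
  have hpi := Real.pi_gt_three
  rw [norm_div, Complex.norm_exp, Complex.norm_real, Real.norm_of_nonneg (by positivity)]
  have e1 : (-m * (√(q.1 ^ 2 + ‖q.2‖ ^ 2) : ℝ)).re = - m.re * √(q.1 ^ 2 + ‖q.2‖ ^ 2) := by simp
  rw [e1, mul_comm (4 * Real.pi), ← div_div]
  apply div_le_self (by positivity) (by linarith)

lemma norm_cexp_I (a : ℝ) : ‖Complex.exp (Complex.I * (a : ℂ))‖ = 1 := by
  rw [mul_comm]; exact Complex.norm_exp_ofReal_mul_I a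

lemma mul_phase_int {α : Type*} [MeasureSpace α] {f : α → ℂ} (hf : Integrable f) {a : α → ℝ}
    (ha : Measurable a) : Integrable (fun q => f q * Complex.exp (Complex.I * (a q : ℂ))) := by
  refine hf.mul_bdd (c := 1) ?_ (Filter.Eventually.of_forall fun q => (norm_cexp_I _).le)
  apply Measurable.aestronglyMeasurable
  fun_prop

lemma yuk_axis {m : ℂ} (hm : 0 < m.re) (κ : ℝ) :
    ∫ q : ℝ × ℂ, yuk m q * Complex.exp (Complex.I * ((κ * q.1 : ℝ) : ℂ)) = 1 / (κ ^ 2 + m ^ 2) := by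
  rw [Measure.volume_eq_prod, integral_prod _ (by
    rw [← Measure.volume_eq_prod]
    exact mul_phase_int (yuk_int hm) (by fun_prop)), ← aux_1d hm κ]
  apply integral_congr_ae
  filter_upwards [compl_mem_ae_iff.2 (measure_singleton (0:ℝ))] with x hx
  rw [integral_mul_const]
  unfold yuk
  simp only
  rw [aux_radial hm hx]

lemma aux_rot {E : Type*} [NormedAddCommGroup E] [InnerProductSpace ℝ E] [FiniteDimensional ℝ E]
    [MeasurableSpace E] [BorelSpace E] (f : ℝ → ℂ) {w w' : E} (h : ‖w‖ = ‖w'‖) :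
    ∫ x : E, f ‖x‖ * Complex.exp (Complex.I * ((inner ℝ w x : ℝ) : ℂ)) =
    ∫ x : E, f ‖x‖ * Complex.exp (Complex.I * ((inner ℝ w' x : ℝ) : ℂ)) := by
  set R : E ≃ₗᵢ[ℝ] E := (Submodule.span ℝ {w - w'})ᗮ.reflection with hR
  have hRw : R w = w' := Submodule.reflection_sub h
  have := R.measurePreserving.integral_comp R.toHomeomorph.measurableEmbedding
    (fun x : E => f ‖x‖ * Complex.exp (Complex.I * ((inner ℝ w' x : ℝ) : ℂ)))
  rw [← this]
  simp only [← hRw, LinearIsometryEquiv.inner_map_map, LinearIsometryEquiv.norm_map]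

lemma yuk_fourier {m : ℂ} (hm : 0 < m.re) (k0 k1 k2 : ℝ) :
    ∫ q : ℝ × ℂ, yuk m q * Complex.exp (Complex.I * ((k0 * q.1 + k1 * q.2.re + k2 * q.2.im : ℝ) : ℂ))
      = 1 / (((k0 ^ 2 + k1 ^ 2 + k2 ^ 2 : ℝ) : ℂ) + m ^ 2) := by
  have hT := (WithLp.volume_preserving_symm_measurableEquiv_toLp_prod ℝ ℂ)
  have hE := (MeasurableEquiv.toLp 2 (ℝ × ℂ)).symm.measurableEmbedding
  set f : ℝ → ℂ := fun r => Complex.exp (-m * (r : ℂ)) / ((4 * Real.pi * r : ℝ) : ℂ) with hf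
  set κ := √(k0 ^ 2 + k1 ^ 2 + k2 ^ 2) with hκ
  have hκ2 : κ ^ 2 = k0 ^ 2 + k1 ^ 2 + k2 ^ 2 := Real.sq_sqrt (by positivity)
  have tr : ∀ a b c : ℝ, ∫ q : ℝ × ℂ, yuk m q * Complex.exp (Complex.I * ((a * q.1 + b * q.2.re + c * q.2.im : ℝ) : ℂ)) = ∫ x : WithLp 2 (ℝ × ℂ), f ‖x‖ * Complex.exp (Complex.I * ((inner ℝ (WithLp.toLp 2 (a, (⟨b, c⟩ : ℂ))) x : ℝ) : ℂ)) := by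
    intro a b c
    rw [← hT.integral_comp hE]
    congr 1
    ext x
    congr 3
    · simp [yuk, hf, WithLp.prod_norm_eq_of_L2]
    · simp [WithLp.prod_inner_apply, Complex.inner]
      ring
  have h0 := yuk_axis hm κ
  have h1 := tr κ 0 0
  simp only [zero_mul, add_zero] at h1
  rw [h1] at h0
  rw [← Complex.ofReal_pow, hκ2] at h0
  rw [tr]
  rw [← h0]
  apply aux_rot
  rw [WithLp.prod_norm_eq_of_L2, WithLp.prod_norm_eq_of_L2]
  congr 1
  simp [Complex.sq_norm, Complex.normSq_apply]
  rw [hκ2]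
  ring

lemma slice (v : ℝ) (hv0 : 0 ≤ v) (hv1 : v < 1) (lam : ℂ) (k0 : ℝ) {ρ : ℝ} (hρ : 0 < ρ)
    (γ : ℝ) (hγ : 0 < γ) (hγ2 : γ ^ 2 * (1 - v ^ 2) = 1) :
    ∫ s : ℝ, (γ : ℂ) * Complex.exp (-(γ : ℂ) * lam * (((√((γ * s) ^ 2 + ρ ^ 2) : ℝ) : ℂ)
        + (v : ℂ) * ((γ * s : ℝ) : ℂ))) / ((4 * Real.pi * √((γ * s) ^ 2 + ρ ^ 2) : ℝ) : ℂ)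
        * Complex.exp (Complex.I * ((k0 * s : ℝ) : ℂ)) =
    ∫ x : ℝ, yuk (lam + Complex.I * k0 * v) (x, (ρ : ℂ)) *
        Complex.exp (Complex.I * ((k0 * x : ℝ) : ℂ)) := by
  have hpos : ∀ x : ℝ, 0 < x ^ 2 + ρ ^ 2 := fun x => by positivity
  have hlt : ∀ x : ℝ, |x| < √(x ^ 2 + ρ ^ 2) := fun x => by
    rw [← Real.sqrt_sq_eq_abs]
    exact Real.sqrt_lt_sqrt (sq_nonneg _) (by nlinarith)
  have hvx : ∀ x : ℝ, 0 < √(x ^ 2 + ρ ^ 2) - v * x := fun x => by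
    have h1 := hlt x
    have h2 := le_abs_self x
    have h3 := abs_nonneg x
    nlinarith
  set φ : ℝ → ℝ := fun x => x - v * √(x ^ 2 + ρ ^ 2) with hφ
  have hd : ∀ x : ℝ, HasDerivAt φ ((√(x ^ 2 + ρ ^ 2) - v * x) / √(x ^ 2 + ρ ^ 2)) x := by
    intro x
    have h := (((hasDerivAt_id x).pow 2).add_const (ρ ^ 2)).sqrt (hpos x).ne'
    have h' := (hasDerivAt_id x).sub (h.const_mul v)
    refine h'.congr_deriv ?_
    have hs := (Real.sqrt_pos.2 (hpos x)).ne'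
    simp
    field_simp
  have hdp : ∀ x : ℝ, 0 < (√(x ^ 2 + ρ ^ 2) - v * x) / √(x ^ 2 + ρ ^ 2) := fun x =>
    div_pos (hvx x) (Real.sqrt_pos.2 (hpos x))
  have hmono : StrictMono φ := strictMono_of_hasDerivAt_pos hd hdp
  -- inverse
  have hsurj : Function.Surjective φ := by
    intro s
    set t := √((γ * s) ^ 2 + ρ ^ 2) with ht
    have ht2 : t ^ 2 = (γ * s) ^ 2 + ρ ^ 2 := Real.sq_sqrt (by positivity)
    have htp : |γ * s| ≤ t := by
      rw [← Real.sqrt_sq_eq_abs]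
      exact Real.sqrt_le_sqrt (by nlinarith)
    have hnn : 0 ≤ γ * (t + v * (γ * s)) := by
      have h2 := neg_abs_le (γ * s)
      have h3 := abs_nonneg (γ * s)
      have : 0 ≤ t + v * (γ * s) := by nlinarith
      positivity
    refine ⟨s + v * (γ * (t + v * (γ * s))), ?_⟩
    have : √((s + v * (γ * (t + v * (γ * s)))) ^ 2 + ρ ^ 2) = γ * (t + v * (γ * s)) := by
      refine (congrArg Real.sqrt ?_).trans (Real.sqrt_sq hnn)
      linear_combination (-(t + v * γ * s) ^ 2 - s ^ 2) * hγ2 - ht2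
    simp only [hφ]
    rw [this]; ring
  have hcov := integral_image_eq_integral_abs_deriv_smul MeasurableSet.univ
    (fun x _ => (hd x).hasDerivWithinAt) hmono.injective.injOn
    (fun s : ℝ => (γ : ℂ) * Complex.exp (-(γ : ℂ) * lam * (((√((γ * s) ^ 2 + ρ ^ 2) : ℝ) : ℂ)
        + (v : ℂ) * ((γ * s : ℝ) : ℂ))) / ((4 * Real.pi * √((γ * s) ^ 2 + ρ ^ 2) : ℝ) : ℂ)
        * Complex.exp (Complex.I * ((k0 * s : ℝ) : ℂ)))
  rw [Set.image_univ, hsurj.range_eq, setIntegral_univ, setIntegral_univ] at hcov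
  rw [hcov]
  congr 1
  ext x
  rw [abs_of_pos (hdp x)]
  have hr := Real.sqrt_pos.2 (hpos x)
  have hr2 : √(x ^ 2 + ρ ^ 2) ^ 2 = x ^ 2 + ρ ^ 2 := Real.sq_sqrt (hpos x).le
  have hw := hvx x
  have hyuk : yuk (lam + Complex.I * k0 * v) (x, (ρ : ℂ)) =
      Complex.exp (-(lam + Complex.I * k0 * v) * (√(x ^ 2 + ρ ^ 2) : ℝ)) /
        ((4 * Real.pi * √(x ^ 2 + ρ ^ 2) : ℝ) : ℂ) := by
    simp [yuk]
  rw [hyuk]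
  simp only [hφ]
  set r := √(x ^ 2 + ρ ^ 2) with hrdef
  have hroot : √((γ * (x - v * r)) ^ 2 + ρ ^ 2) = γ * (r - v * x) := by
    rw [← Real.sqrt_sq (by positivity : 0 ≤ γ * (r - v * x))]
    congr 1
    linear_combination -(r ^ 2 - x ^ 2) * hγ2 - hr2
  rw [hroot]
  have hexp : -(γ : ℂ) * lam * (((γ * (r - v * x) : ℝ) : ℂ) + (v : ℂ) * ((γ * (x - v * r) : ℝ) : ℂ))
      = - lam * r := by
    have : ((γ ^ 2 * (1 - v ^ 2) : ℝ) : ℂ) = 1 := by rw [hγ2]; simp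
    push_cast at this ⊢
    linear_combination (-lam * r) * this
  rw [hexp]
  have hw' : ((r - v * x : ℝ) : ℂ) ≠ 0 := by exact_mod_cast hw.ne'
  have hr' : (r : ℂ) ≠ 0 := by exact_mod_cast hr.ne'
  have hg' : (γ : ℂ) ≠ 0 := by exact_mod_cast hγ.ne'
  have hpi : (Real.pi : ℂ) ≠ 0 := by exact_mod_cast Real.pi_ne_zero
  have hE : Complex.exp (-(lam + Complex.I * k0 * v) * (r : ℂ)) * Complex.exp (Complex.I * ((k0 * x : ℝ) : ℂ))
      = Complex.exp (-lam * r) * Complex.exp (Complex.I * ((k0 * (x - v * r) : ℝ) : ℂ)) := by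
    rw [← Complex.exp_add, ← Complex.exp_add]
    congr 1
    push_cast
    ring
  rw [div_mul_eq_mul_div, div_mul_eq_mul_div, hE, mul_assoc, Complex.real_smul,
    Complex.ofReal_div]
  generalize Complex.exp (-lam * r) * Complex.exp (Complex.I * ((k0 * (x - v * r) : ℝ) : ℂ)) = A
  rw [Complex.ofReal_mul _ (γ * _), Complex.ofReal_mul γ, Complex.ofReal_mul _ r]
  generalize ((r - v * x : ℝ) : ℂ) = B at *
  push_cast
  field_simp

/-- coordinates -/
noncomputable def coordE : ℝ × ℂ ≃ᵐ (Fin 3 → ℝ) :=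
  ((MeasurableEquiv.refl ℝ).prodCongr Complex.measurableEquivPi).trans
    (MeasurableEquiv.piFinSuccAbove (fun _ : Fin 3 => ℝ) 0).symm

lemma coordE_mp : MeasurePreserving coordE := by
  have h1 : MeasurePreserving ((MeasurableEquiv.refl ℝ).prodCongr Complex.measurableEquivPi)
      (volume : Measure (ℝ × ℂ)) volume :=
    (MeasurePreserving.id volume).prod Complex.volume_preserving_equiv_pi
  exact ((volume_preserving_piFinSuccAbove (fun _ : Fin 3 => ℝ) 0).symm).comp h1

lemma coordE_0 (q : ℝ × ℂ) : coordE q 0 = q.1 := by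
  simp [coordE, MeasurableEquiv.piFinSuccAbove]; rfl
lemma coordE_1 (q : ℝ × ℂ) : coordE q 1 = q.2.re := by
  simp [coordE, MeasurableEquiv.piFinSuccAbove]; rfl
lemma coordE_2 (q : ℝ × ℂ) : coordE q 2 = q.2.im := by
  simp [coordE, MeasurableEquiv.piFinSuccAbove]; rfl

/-- For `Re λ > 0`, the fundamental solution `g(y) = γ·exp(-γλ(|ỹ| + v·ỹ₁))/(4π|ỹ|)`
is integrable on `ℝ³` and its Fourier transform is `1 / (|k|² + (λ + i k₁ v)²)`. -/
theorem fundamental_solution_fourier_transform (v : ℝ) (hv0 : 0 ≤ v) (hv1 : v < 1)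
    (lam : ℂ) (hlam : 0 < lam.re) (g : (Fin 3 → ℝ) → ℂ)
    (hg : ∀ y : Fin 3 → ℝ,
      g y = ((1 / Real.sqrt (1 - v ^ 2) : ℝ) : ℂ) *
        Complex.exp (-((1 / Real.sqrt (1 - v ^ 2) : ℝ) : ℂ) * lam *
          (((Real.sqrt (((1 / Real.sqrt (1 - v ^ 2)) * y 0) ^ 2 + (y 1) ^ 2 + (y 2) ^ 2) : ℝ) : ℂ)
            + ((v : ℝ) : ℂ) * (((1 / Real.sqrt (1 - v ^ 2)) * y 0 : ℝ) : ℂ))) /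
        ((4 * Real.pi *
          Real.sqrt (((1 / Real.sqrt (1 - v ^ 2)) * y 0) ^ 2 + (y 1) ^ 2 + (y 2) ^ 2) : ℝ) : ℂ)) :
    Integrable g ∧
    ∀ k : Fin 3 → ℝ,
      (∫ y : Fin 3 → ℝ, g y * Complex.exp (Complex.I *
          ((k 0 * y 0 + k 1 * y 1 + k 2 * y 2 : ℝ) : ℂ)))
        = 1 / ((((k 0) ^ 2 + (k 1) ^ 2 + (k 2) ^ 2 : ℝ) : ℂ)
            + (lam + Complex.I * ((k 0 : ℝ) : ℂ) * ((v : ℝ) : ℂ)) ^ 2) := by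
  have hv2 : 0 < 1 - v ^ 2 := by nlinarith
  have hsq := Real.sqrt_pos.2 hv2
  set γ : ℝ := 1 / Real.sqrt (1 - v ^ 2) with hγdef
  have hγ : 0 < γ := by positivity
  have hγ2 : γ ^ 2 * (1 - v ^ 2) = 1 := by
    rw [hγdef, div_pow, Real.sq_sqrt hv2.le]
    field_simp
  have hγ1 : 1 ≤ γ ^ 2 := by nlinarith [sq_nonneg v, sq_nonneg γ, mul_nonneg (sq_nonneg γ) (sq_nonneg v)]
  have hγ1' : 1 ≤ γ := by nlinarith
  have hG : ∀ q : ℝ × ℂ, g (coordE q) = (γ : ℂ) * Complex.exp (-(γ : ℂ) * lam *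
      (((√((γ * q.1) ^ 2 + ‖q.2‖ ^ 2) : ℝ) : ℂ) + (v : ℂ) * ((γ * q.1 : ℝ) : ℂ))) /
        ((4 * Real.pi * √((γ * q.1) ^ 2 + ‖q.2‖ ^ 2) : ℝ) : ℂ) := by
    intro q
    rw [hg, coordE_0, coordE_1, coordE_2, Complex.sq_norm, Complex.normSq_apply, ← sq, ← sq,
      ← add_assoc]
  have hGm : Measurable (fun q => g (coordE q)) := by
    simp_rw [hG]
    fun_prop
  have hGint : Integrable (fun q => g (coordE q)) := by
    have hc : 0 < lam.re * (1 - v) := mul_pos hlam (by linarith)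
    refine Integrable.mono' ((aux_int_E hc).const_mul γ) hGm.aestronglyMeasurable ?_
    have hae : ∀ᵐ q : ℝ × ℂ, q ≠ 0 := by
      rw [Measure.volume_eq_prod]
      exact compl_mem_ae_iff.2 (measure_singleton _)
    filter_upwards [hae] with q hq
    have hpi := Real.pi_gt_three
    have hpos : 0 < q.1 ^ 2 + ‖q.2‖ ^ 2 := by
      rcases eq_or_ne q.1 0 with h | h
      · have : q.2 ≠ 0 := fun h' => hq (Prod.ext h h')
        positivity
      · positivity
    have hr := Real.sqrt_pos.2 hpos
    have hle : √(q.1 ^ 2 + ‖q.2‖ ^ 2) ≤ √((γ * q.1) ^ 2 + ‖q.2‖ ^ 2) :=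
      Real.sqrt_le_sqrt (by nlinarith [sq_nonneg q.1])
    have habs : |γ * q.1| ≤ √((γ * q.1) ^ 2 + ‖q.2‖ ^ 2) := by
      rw [← Real.sqrt_sq_eq_abs]
      exact Real.sqrt_le_sqrt (by nlinarith [sq_nonneg ‖q.2‖])
    rw [hG, norm_div, norm_mul, Complex.norm_exp, Complex.norm_real, Complex.norm_real,
      Real.norm_of_nonneg hγ.le, Real.norm_of_nonneg (by positivity), mul_div_assoc]
    set r := √(q.1 ^ 2 + ‖q.2‖ ^ 2)
    set t := √((γ * q.1) ^ 2 + ‖q.2‖ ^ 2)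
    have e1 : (-(γ : ℂ) * lam * ((t : ℂ) + (v : ℂ) * ((γ * q.1 : ℝ) : ℂ))).re
        = - (γ * lam.re * (t + v * (γ * q.1))) := by
      rw [show -(γ : ℂ) * lam * ((t : ℂ) + (v : ℂ) * ((γ * q.1 : ℝ) : ℂ)) =
        ((-(γ * (t + v * (γ * q.1))) : ℝ) : ℂ) * lam by push_cast; ring, Complex.re_ofReal_mul]
      ring
    rw [e1]
    have e2 : (1 - v) * r ≤ γ * (t + v * (γ * q.1)) := by
      have h2 := neg_abs_le (γ * q.1)
      have h3 : (1 - v) * t ≤ t + v * (γ * q.1) := by nlinarith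
      have h4 : (1 - v) * r ≤ (1 - v) * t := mul_le_mul_of_nonneg_left hle (by linarith)
      have h5 : 0 ≤ (1 - v) * r := mul_nonneg (by linarith) hr.le
      nlinarith
    gcongr
    · nlinarith
    · nlinarith
  have hemb := coordE.measurableEmbedding
  refine ⟨(coordE_mp.integrable_comp_emb hemb).1 hGint, fun k => ?_⟩
  rw [← coordE_mp.integral_comp hemb]
  simp only [coordE_0, coordE_1, coordE_2]
  set m : ℂ := lam + Complex.I * ((k 0 : ℝ) : ℂ) * ((v : ℝ) : ℂ) with hm
  have hmre : 0 < m.re := by simpa [hm] using hlam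
  rw [← yuk_fourier hmre (k 0) (k 1) (k 2)]
  have i1 : Integrable (fun q : ℝ × ℂ => g (coordE q) * Complex.exp (Complex.I *
    ((k 0 * q.1 + k 1 * q.2.re + k 2 * q.2.im : ℝ) : ℂ))) := mul_phase_int hGint (by fun_prop)
  have i2 : Integrable (fun q : ℝ × ℂ => yuk m q * Complex.exp (Complex.I *
    ((k 0 * q.1 + k 1 * q.2.re + k 2 * q.2.im : ℝ) : ℂ))) := mul_phase_int (yuk_int hmre) (by fun_prop)
  rw [Measure.volume_eq_prod] at i1 i2 ⊢
  rw [integral_prod_symm _ i1, integral_prod_symm _ i2]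
  apply integral_congr_ae
  filter_upwards [compl_mem_ae_iff.2 (measure_singleton (0:ℂ))] with p hp
  have hsplit : ∀ x : ℝ, Complex.exp (Complex.I * ((k 0 * x + k 1 * p.re + k 2 * p.im : ℝ) : ℂ))
      = Complex.exp (Complex.I * ((k 0 * x : ℝ) : ℂ)) *
        Complex.exp (Complex.I * ((k 1 * p.re + k 2 * p.im : ℝ) : ℂ)) := by
    intro x
    rw [← Complex.exp_add]
    congr 1
    push_cast
    ring
  simp only [hsplit, ← mul_assoc]
  rw [integral_mul_const, integral_mul_const]
  congr 1
  have hs := slice v hv0 hv1 lam (k 0) (norm_pos_iff.2 hp) γ hγ hγ2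
  simp only [hG]
  rw [hs]
  simp [yuk, hm]
end

section
/- Let ρ : ℝ³ → ℝ be smooth and compactly supported, let 0 ≤ v < 1, and set γ = (1 − v²)^{−1/2}. Define u(x) = (γ/(4π))·∫_{ℝ³} ρ(y)/√(γ²(x₁−y₁)² + (x₂−y₂)² + (x₃−y₃)²) dy. Then u is twice continuously differentiable on ℝ³ and satisfies −(Δu)(x) + v²·(∂₁²u)(x) = ρ(x) for every x ∈ ℝ³. -/
open MeasureTheory

/-- The partial derivative in the `i`-th coordinate direction of a real-valued
function on `ℝ³`. -/
noncomputable def pdR (i : Fin 3) (f : (Fin 3 → ℝ) → ℝ) : (Fin 3 → ℝ) → ℝ :=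
  fun x => fderiv ℝ f x (Pi.single i 1)


open Filter Topology

namespace Coul

/-- The anisotropic quadratic form. -/
noncomputable def Q (a : Fin 3 → ℝ) (z : Fin 3 → ℝ) : ℝ := ∑ j, a j * z j ^ 2

lemma Q_nonneg {a : Fin 3 → ℝ} (ha : ∀ i, 1 ≤ a i) (z : Fin 3 → ℝ) : 0 ≤ Q a z :=
  Finset.sum_nonneg fun i _ => mul_nonneg (by linarith [ha i]) (sq_nonneg _)

lemma norm_sq_le_Q {a : Fin 3 → ℝ} (ha : ∀ i, 1 ≤ a i) (z : Fin 3 → ℝ) : ‖z‖ ^ 2 ≤ Q a z := by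
  have h : ‖z‖ ≤ √(Q a z) := by
    rw [pi_norm_le_iff_of_nonneg (Real.sqrt_nonneg _)]
    intro i
    apply Real.le_sqrt_of_sq_le
    rw [Real.norm_eq_abs, sq_abs]
    calc z i ^ 2 ≤ a i * z i ^ 2 := by nlinarith [ha i, sq_nonneg (z i)]
      _ ≤ _ := Finset.single_le_sum (f := fun j => a j * z j ^ 2)
          (fun j _ => mul_nonneg (by linarith [ha j]) (sq_nonneg _)) (Finset.mem_univ i)
  calc ‖z‖ ^ 2 ≤ √(Q a z) ^ 2 := by gcongr
    _ = _ := Real.sq_sqrt (Q_nonneg ha z)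

lemma Q_cont (a : Fin 3 → ℝ) : Continuous (Q a) := by unfold Q; fun_prop

lemma norm_le_sqrt {a : Fin 3 → ℝ} (ha : ∀ i, 1 ≤ a i) (z : Fin 3 → ℝ) : ‖z‖ ≤ √(Q a z) :=
  Real.le_sqrt_of_sq_le (norm_sq_le_Q ha z)

lemma K_locInt {a : Fin 3 → ℝ} (ha : ∀ i, 1 ≤ a i) :
    LocallyIntegrable (fun z => (√(Q a z))⁻¹) := by
  refine locallyIntegrable_of_norm_le_rpow (C := 1) (α := 1) (by simp) (by simp) ?_ ?_
  · have : ∀ᵐ z : Fin 3 → ℝ, z ≠ 0 := by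
      simp [ae_iff, measure_singleton]
    filter_upwards [this] with z hz
    have : 0 < ‖z‖ := norm_pos_iff.2 hz
    rw [Real.rpow_neg_one, one_mul, Real.norm_of_nonneg (by positivity)]
    exact inv_anti₀ this (norm_le_sqrt ha z)
  · have := Q_cont a
    exact Measurable.aestronglyMeasurable (by fun_prop)

lemma pdR_contDiff {f : (Fin 3 → ℝ) → ℝ} (hf : ContDiff ℝ (⊤ : ℕ∞) f) (i : Fin 3) :
    ContDiff ℝ (⊤ : ℕ∞) (pdR i f) := by
  unfold pdR
  exact (hf.fderiv_right (m := (⊤ : ℕ∞)) (by simp)).clm_apply contDiff_const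

lemma pdR_supp {f : (Fin 3 → ℝ) → ℝ} (hf : HasCompactSupport f) (i : Fin 3) :
    HasCompactSupport (pdR i f) := by
  unfold pdR
  exact hf.fderiv_apply ℝ _

lemma pdR_lineDeriv {f : (Fin 3 → ℝ) → ℝ} (hf : ContDiff ℝ (⊤ : ℕ∞) f) (i : Fin 3) (x) :
    HasLineDerivAt ℝ f (pdR i f x) x (Pi.single i 1) :=
  ((hf.differentiable (by simp)) x).hasFDerivAt.hasLineDerivAt _

lemma cont_mul_int {f g : (Fin 3 → ℝ) → ℝ} (hf : Continuous f) (hg : Continuous g)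
    (hc : HasCompactSupport g) : Integrable (fun x => f x * g x) :=
  (hf.mul hg).integrable_of_hasCompactSupport hc.mul_left

lemma ibp {f f' g : (Fin 3 → ℝ) → ℝ} {i : Fin 3} (hf : Continuous f) (hf' : Continuous f')
    (hd : ∀ x, HasLineDerivAt ℝ f (f' x) x (Pi.single i 1))
    (hg : ContDiff ℝ (⊤ : ℕ∞) g) (hc : HasCompactSupport g) :
    ∫ x, f x * pdR i g x = - ∫ x, f' x * g x := by
  have := integral_bilinear_hasLineDerivAt_right_eq_neg_left_of_integrable (μ := volume)
    (f := f) (f' := f') (g := g) (g' := pdR i g) (v := Pi.single i 1)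
    (B := ContinuousLinearMap.mul ℝ ℝ)
    (by simpa using cont_mul_int hf' hg.continuous hc)
    (by simpa using cont_mul_int hf (pdR_contDiff hg i).continuous (pdR_supp hc i))
    (by simpa using cont_mul_int hf hg.continuous hc)
    (fun x _ => hd x) (fun x _ => pdR_lineDeriv hg i x)
  simpa using this

lemma Q_line (a : Fin 3 → ℝ) (z : Fin 3 → ℝ) (i : Fin 3) (t : ℝ) :
    Q a (z + t • Pi.single i 1) = Q a z + 2 * a i * z i * t + a i * t ^ 2 := by
  fin_cases i <;> simp [Q, Fin.sum_univ_three, Pi.single_apply] <;> ring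

lemma Q_lineDeriv (a : Fin 3 → ℝ) (z : Fin 3 → ℝ) (i : Fin 3) (e : ℝ) (h : 0 < Q a z + e) :
    HasDerivAt (fun t : ℝ => √(Q a (z + t • Pi.single i 1) + e)) (a i * z i / √(Q a z + e)) 0 := by
  simp only [Q_line]
  have h1 : HasDerivAt (fun t : ℝ => Q a z + 2 * a i * z i * t + a i * t ^ 2 + e)
      (2 * a i * z i) 0 := by
    have := ((((hasDerivAt_id (0:ℝ)).const_mul (2 * a i * z i)).const_add (Q a z)).add
      (((hasDerivAt_id (0:ℝ)).pow 2).const_mul (a i))).add_const e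
    exact this.congr_deriv (by simp)
  convert h1.sqrt (by simpa using h.ne') using 1
  simp
  field_simp

lemma K1 (a : Fin 3 → ℝ) (z : Fin 3 → ℝ) (i : Fin 3) (e : ℝ) (h : 0 < Q a z + e) :
    HasLineDerivAt ℝ (fun z => (√(Q a z + e))⁻¹) (-(a i * z i) / √(Q a z + e) ^ 3) z
      (Pi.single i 1) := by
  have hs : √(Q a z + e) ≠ 0 := (Real.sqrt_pos.2 h).ne'
  have := (Q_lineDeriv a z i e h).inv (by simpa using hs)
  unfold HasLineDerivAt
  refine this.congr_deriv ?_
  simp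
  field_simp

lemma K2 (a : Fin 3 → ℝ) (z : Fin 3 → ℝ) (i : Fin 3) (e : ℝ) (h : 0 < Q a z + e) :
    HasLineDerivAt ℝ (fun z => -(a i * z i) / √(Q a z + e) ^ 3)
      (-(a i) / √(Q a z + e) ^ 3 + 3 * a i ^ 2 * z i ^ 2 / √(Q a z + e) ^ 5) z
      (Pi.single i 1) := by
  have hs : √(Q a z + e) ≠ 0 := (Real.sqrt_pos.2 h).ne'
  have h1 : HasDerivAt (fun t : ℝ => -(a i * (z + t • (Pi.single i 1 : Fin 3 → ℝ)) i)) (-(a i)) 0 := by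
    have := (((hasDerivAt_id (0:ℝ)).const_add (z i)).const_mul (a i)).neg
    have h2 := this.congr_deriv (g' := -(a i)) (by simp)
    refine h2.congr_of_eventuallyEq (Eventually.of_forall fun t => ?_)
    simp
  have := h1.div ((Q_lineDeriv a z i e h).pow 3) (by simpa using hs)
  unfold HasLineDerivAt
  refine this.congr_deriv ?_
  simp
  field_simp

lemma reg {a : Fin 3 → ℝ} (ha : ∀ i, 1 ≤ a i) {e : ℝ} (he : 0 < e) {φ : (Fin 3 → ℝ) → ℝ}
    (hg : ContDiff ℝ (⊤ : ℕ∞) φ) (hc : HasCompactSupport φ) :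
    ∫ z, (√(Q a z + e))⁻¹ * ∑ i, (a i)⁻¹ * pdR i (pdR i φ) z
      = - ∫ z, 3 * e / √(Q a z + e) ^ 5 * φ z := by
  have hpos : ∀ z, 0 < Q a z + e := fun z => by linarith [Q_nonneg ha z]
  have hs : ∀ z, √(Q a z + e) ≠ 0 := fun z => (Real.sqrt_pos.2 (hpos z)).ne'
  have hs3 : ∀ z, √(Q a z + e) ^ 3 ≠ 0 := fun z => pow_ne_zero _ (hs z)
  have hs5 : ∀ z, √(Q a z + e) ^ 5 ≠ 0 := fun z => pow_ne_zero _ (hs z)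
  have hQ := Q_cont a
  have c0 : Continuous (fun z => (√(Q a z + e))⁻¹) := by fun_prop (disch := assumption)
  have c1 : ∀ i, Continuous (fun z : Fin 3 → ℝ => -(a i * z i) / √(Q a z + e) ^ 3) := fun i => by
    fun_prop (disch := assumption)
  have c2 : ∀ i, Continuous (fun z : Fin 3 → ℝ => -(a i) / √(Q a z + e) ^ 3
      + 3 * a i ^ 2 * z i ^ 2 / √(Q a z + e) ^ 5) := fun i => by
    fun_prop (disch := assumption)
  have key : ∀ i, ∫ z, (√(Q a z + e))⁻¹ * pdR i (pdR i φ) z =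
      ∫ z, (-(a i) / √(Q a z + e) ^ 3 + 3 * a i ^ 2 * z i ^ 2 / √(Q a z + e) ^ 5) * φ z := by
    intro i
    rw [ibp c0 (c1 i) (fun x => K1 a x i e (hpos x)) (pdR_contDiff hg i) (pdR_supp hc i),
      ibp (c1 i) (c2 i) (fun x => K2 a x i e (hpos x)) hg hc, neg_neg]
  calc _ = ∫ z, ∑ i, (a i)⁻¹ * ((√(Q a z + e))⁻¹ * pdR i (pdR i φ) z) := by
        congr 1; ext z; rw [Finset.mul_sum]; congr 1; ext i; ring
    _ = ∑ i, (a i)⁻¹ * ∫ z, ((√(Q a z + e))⁻¹ * pdR i (pdR i φ) z) := by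
        rw [integral_finsetSum]
        · simp_rw [integral_const_mul]
        · intro i _
          exact (cont_mul_int c0 (pdR_contDiff (pdR_contDiff hg i) i).continuous
            (pdR_supp (pdR_supp hc i) i)).const_mul _
    _ = ∫ z, ∑ i, (a i)⁻¹ *
        ((-(a i) / √(Q a z + e) ^ 3 + 3 * a i ^ 2 * z i ^ 2 / √(Q a z + e) ^ 5) * φ z) := by
        rw [integral_finsetSum]
        · simp_rw [integral_const_mul, key]
        · intro i _
          exact (cont_mul_int (c2 i) hg.continuous hc).const_mul _
    _ = _ := by
        rw [← integral_neg]
        congr 1; ext z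
        have hsq : √(Q a z + e) ^ 2 = Q a z + e := Real.sq_sqrt (hpos z).le
        have hn := hs z
        have ht : ∀ i, (a i)⁻¹ * ((-(a i) / √(Q a z + e) ^ 3
            + 3 * a i ^ 2 * z i ^ 2 / √(Q a z + e) ^ 5) * φ z)
            = (-(√(Q a z + e) ^ 2) + 3 * (a i * z i ^ 2)) * (φ z / √(Q a z + e) ^ 5) := by
          intro i
          have : a i ≠ 0 := by linarith [ha i]
          field_simp
        simp_rw [ht]
        rw [← Finset.sum_mul, Finset.sum_add_distrib, ← Finset.mul_sum]
        change (_ + 3 * Q a z) * _ = _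
        rw [hsq]
        simp
        ring

lemma rad_tendsto : Tendsto (fun y : ℝ => y ^ 3 / √(y ^ 2 + 1) ^ 3) atTop (𝓝 1) := by
  have h : Tendsto (fun y : ℝ => (√(1 + (y⁻¹) ^ 2))⁻¹ ^ 3) atTop (𝓝 ((√(1 + (0:ℝ) ^ 2))⁻¹ ^ 3)) := by
    have h0 : Tendsto (fun y : ℝ => √(1 + (y⁻¹) ^ 2)) atTop (𝓝 (√(1 + (0:ℝ) ^ 2))) :=
      ((tendsto_const_nhds.add (tendsto_inv_atTop_zero.pow 2))).sqrt
    exact (h0.inv₀ (by simp)).pow 3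
  simp only [ne_eq, OfNat.ofNat_ne_zero, not_false_eq_true, zero_pow, add_zero, Real.sqrt_one,
    inv_one, one_pow] at h
  refine h.congr' ?_
  filter_upwards [eventually_gt_atTop 0] with y hy
  have : √(y ^ 2 + 1) = y * √(1 + (y⁻¹) ^ 2) := by
    rw [← Real.sqrt_sq hy.le, ← Real.sqrt_mul (by positivity), Real.sqrt_sq hy.le]
    congr 1; field_simp
  rw [this]
  have h2 : 0 < √(1 + (y⁻¹) ^ 2) := Real.sqrt_pos.2 (by positivity)
  field_simp

lemma rad_int : ∫ y in Set.Ioi (0:ℝ), y ^ 2 * (3 / √(y ^ 2 + 1) ^ 5) = 1 := by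
  have hd : ∀ y : ℝ, HasDerivAt (fun y : ℝ => y ^ 3 / √(y ^ 2 + 1) ^ 3)
      (y ^ 2 * (3 / √(y ^ 2 + 1) ^ 5)) y := by
    intro y
    have hp : 0 < √(y ^ 2 + 1) := Real.sqrt_pos.2 (by positivity)
    have hsq : √(y ^ 2 + 1) ^ 2 = y ^ 2 + 1 := Real.sq_sqrt (by positivity)
    have h1 : HasDerivAt (fun y : ℝ => y ^ 2 + 1) (2 * y) y := by
      simpa using (hasDerivAt_pow 2 y).add_const 1
    have h2 := h1.sqrt (by positivity)
    have h3 := (hasDerivAt_pow 3 y).div (h2.pow 3) (by simpa using hp.ne')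
    refine h3.congr_deriv ?_
    simp only [Pi.pow_apply]
    generalize √(y ^ 2 + 1) = s at *
    field_simp
    norm_num
    linear_combination (3 * y ^ 2 * s ^ 2) * hsq
  have := integral_Ioi_of_hasDerivAt_of_nonneg (a := 0) (l := 1)
    (hd 0).continuousAt.continuousWithinAt (fun y _ => hd y)
    (fun y _ => by positivity) rad_tendsto
  simpa using this

lemma eucl_int : ∫ w : EuclideanSpace ℝ (Fin 3), 3 / √(‖w‖ ^ 2 + 1) ^ 5 = 4 * Real.pi := by
  rw [integral_fun_norm_addHaar volume (fun r : ℝ => 3 / √(r ^ 2 + 1) ^ 5)]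
  simp only [finrank_euclideanSpace, Fintype.card_fin, smul_eq_mul, nsmul_eq_mul]
  rw [show 3 - 1 = 2 from rfl, rad_int, Measure.real, EuclideanSpace.volume_ball_fin_three]
  simp
  rw [ENNReal.toReal_ofReal (by positivity)]
  ring

lemma pi_int : ∫ w : Fin 3 → ℝ, 3 / √((∑ j, w j ^ 2) + 1) ^ 5 = 4 * Real.pi := by
  rw [← eucl_int, ← (PiLp.volume_preserving_toLp (Fin 3)).integral_comp
    (MeasurableEquiv.toLp 2 (Fin 3 → ℝ)).measurableEmbedding]
  simp [EuclideanSpace.norm_sq_eq]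

/-- The weights. -/
noncomputable def A (g : ℝ) : Fin 3 → ℝ := ![g ^ 2, 1, 1]

lemma const_int {g : ℝ} (hg : 0 < g) :
    ∫ w : Fin 3 → ℝ, 3 / √(Q (A g) w + 1) ^ 5 = 4 * Real.pi / g := by
  have hdet : (Matrix.diagonal ![g, 1, 1]).det = g := by
    simp [Matrix.det_diagonal, Fin.prod_univ_three]
  have h := Real.smul_map_diagonal_volume_pi (D := ![g, 1, 1]) (by rw [hdet]; exact hg.ne')
  rw [hdet, abs_of_pos hg] at h
  have h2 := pi_int
  rw [← h, integral_smul_measure, integral_map] at h2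
  · rw [ENNReal.toReal_ofReal hg.le] at h2
    rw [eq_div_iff hg.ne', ← h2, mul_comm, smul_eq_mul]
    congr 2
    ext w
    simp [Q, A, Fin.sum_univ_three, Matrix.mulVec_diagonal, mul_pow]
  · exact (LinearMap.continuous_on_pi _).measurable.aemeasurable
  · refine Measurable.aestronglyMeasurable (by fun_prop)

lemma ker_int {a : Fin 3 → ℝ} (ha : ∀ i, 1 ≤ a i) :
    Integrable (fun w : Fin 3 → ℝ => 3 / √(Q a w + 1) ^ 5) := by
  have h := (integrable_rpow_neg_one_add_norm_sq (E := Fin 3 → ℝ) (μ := volume) (r := 5)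
    (by simp; norm_num)).const_mul 3
  refine h.mono' ?_ (Eventually.of_forall fun w => ?_)
  · have := Q_cont a
    exact Measurable.aestronglyMeasurable (by fun_prop)
  · have h1 : (0:ℝ) < 1 + ‖w‖ ^ 2 := by positivity
    have h2 := norm_sq_le_Q ha w
    rw [Real.norm_of_nonneg (by positivity), div_eq_mul_inv]
    have h3 : ((1:ℝ) + ‖w‖ ^ 2) ^ (-(5:ℝ) / 2) = (√(1 + ‖w‖ ^ 2) ^ 5)⁻¹ := by
      rw [Real.sqrt_eq_rpow, ← Real.rpow_natCast _ 5, ← Real.rpow_mul h1.le, ← Real.rpow_neg h1.le]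
      norm_num
    rw [h3]
    have h4 : 0 < √(1 + ‖w‖ ^ 2) := Real.sqrt_pos.2 h1
    gcongr 3 * (?_ ^ 5)⁻¹
    exact Real.sqrt_le_sqrt (by linarith)

lemma rhs_scale {a : Fin 3 → ℝ} {ε : ℝ} (he : 0 < ε) (φ : (Fin 3 → ℝ) → ℝ) :
    ∫ z, 3 * ε ^ 2 / √(Q a z + ε ^ 2) ^ 5 * φ z
      = ∫ w, 3 / √(Q a w + 1) ^ 5 * φ (ε • w) := by
  have h := Measure.integral_comp_smul volume
    (fun z => 3 * ε ^ 2 / √(Q a z + ε ^ 2) ^ 5 * φ z) ε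
  rw [abs_of_pos (by positivity), smul_eq_mul] at h
  have h3 : Module.finrank ℝ (Fin 3 → ℝ) = 3 := by simp
  rw [h3] at h
  have : ∫ z, 3 * ε ^ 2 / √(Q a z + ε ^ 2) ^ 5 * φ z
      = ε ^ 3 * ∫ w, 3 * ε ^ 2 / √(Q a (ε • w) + ε ^ 2) ^ 5 * φ (ε • w) := by
    rw [h]; field_simp
  rw [this, ← integral_const_mul]
  congr 1; ext w
  have hq : Q a (ε • w) + ε ^ 2 = ε ^ 2 * (Q a w + 1) := by
    simp only [Q, Pi.smul_apply, smul_eq_mul, mul_add, Finset.mul_sum, mul_one]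
    congr 2; ext j; ring
  rw [hq, Real.sqrt_mul (by positivity), Real.sqrt_sq he.le, mul_pow]
  field_simp

lemma rhs_tendsto {a : Fin 3 → ℝ} (ha : ∀ i, 1 ≤ a i) {φ : (Fin 3 → ℝ) → ℝ}
    (hg : Continuous φ) (hc : HasCompactSupport φ) :
    Tendsto (fun ε : ℝ => ∫ w, 3 / √(Q a w + 1) ^ 5 * φ (ε • w)) (𝓝[>] 0)
      (𝓝 (∫ w, 3 / √(Q a w + 1) ^ 5 * φ 0)) := by
  obtain ⟨C, hC⟩ := hc.exists_bound_of_continuous hg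
  have hQ := Q_cont a
  refine tendsto_integral_filter_of_dominated_convergence
    (fun w => 3 / √(Q a w + 1) ^ 5 * C) ?_ ?_ ((ker_int ha).mul_const C) ?_
  · refine Eventually.of_forall fun ε => Measurable.aestronglyMeasurable ?_
    have := hg.measurable
    fun_prop
  · refine Eventually.of_forall fun ε => Eventually.of_forall fun w => ?_
    rw [norm_mul, Real.norm_of_nonneg (by positivity)]
    exact mul_le_mul_of_nonneg_left (hC _) (by positivity)
  · refine Eventually.of_forall fun w => ?_
    have : Tendsto (fun ε : ℝ => φ (ε • w)) (𝓝[>] 0) (𝓝 (φ 0)) := by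
      have hcont : Continuous (fun ε : ℝ => φ (ε • w)) := by fun_prop
      have := hcont.tendsto 0
      rw [zero_smul] at this
      exact this.mono_left nhdsWithin_le_nhds
    exact this.const_mul _

lemma lhs_tendsto {a : Fin 3 → ℝ} (ha : ∀ i, 1 ≤ a i) {ψ : (Fin 3 → ℝ) → ℝ}
    (hg : Continuous ψ) (hc : HasCompactSupport ψ) :
    Tendsto (fun ε : ℝ => ∫ z, (√(Q a z + ε ^ 2))⁻¹ * ψ z) (𝓝[>] 0)
      (𝓝 (∫ z, (√(Q a z))⁻¹ * ψ z)) := by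
  have hQ := Q_cont a
  have hz : ∀ᵐ z : Fin 3 → ℝ, z ≠ 0 := by
    simp [ae_iff, measure_singleton]
  have hpos : ∀ z : Fin 3 → ℝ, z ≠ 0 → 0 < Q a z := fun z hz =>
    lt_of_lt_of_le (by have := norm_pos_iff.2 hz; positivity) (norm_sq_le_Q ha z)
  have hi : Integrable (fun z => (√(Q a z))⁻¹ * ψ z) := by
    have := (K_locInt ha).integrable_smul_left_of_hasCompactSupport hg hc
    simpa [mul_comm] using this
  refine tendsto_integral_filter_of_dominated_convergence
    (fun z => ‖(√(Q a z))⁻¹ * ψ z‖) ?_ ?_ hi.norm ?_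
  · refine Eventually.of_forall fun ε => Measurable.aestronglyMeasurable ?_
    have := hg.measurable
    fun_prop
  · refine Eventually.of_forall fun ε => ?_
    filter_upwards [hz] with z hz
    rw [norm_mul, norm_mul]
    refine mul_le_mul_of_nonneg_right ?_ (norm_nonneg _)
    rw [Real.norm_of_nonneg (by positivity), Real.norm_of_nonneg (by positivity)]
    exact inv_anti₀ (Real.sqrt_pos.2 (hpos z hz)) (Real.sqrt_le_sqrt (by nlinarith [sq_nonneg ε]))
  · filter_upwards [hz] with z hz
    refine Tendsto.mul_const _ ?_
    refine Tendsto.inv₀ ?_ (Real.sqrt_pos.2 (hpos z hz)).ne'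
    have hcont : Continuous (fun ε : ℝ => √(Q a z + ε ^ 2)) := by fun_prop
    have := hcont.tendsto 0
    simp only [ne_eq, OfNat.ofNat_ne_zero, not_false_eq_true, zero_pow, add_zero] at this
    exact this.mono_left nhdsWithin_le_nhds

lemma fund {g : ℝ} (hg1 : 1 ≤ g) {φ : (Fin 3 → ℝ) → ℝ}
    (hg : ContDiff ℝ (⊤ : ℕ∞) φ) (hc : HasCompactSupport φ) :
    ∫ z, (√(Q (A g) z))⁻¹ * ∑ i, (A g i)⁻¹ * pdR i (pdR i φ) z = -(4 * Real.pi / g * φ 0) := by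
  have ha : ∀ i, 1 ≤ A g i := by
    intro i
    fin_cases i <;> simp [A]
    exact hg1.trans (le_abs_self g)
  have hcont : Continuous (fun z => ∑ i, (A g i)⁻¹ * pdR i (pdR i φ) z) :=
    continuous_finsetSum _ fun i _ =>
      (pdR_contDiff (pdR_contDiff hg i) i).continuous.const_mul _
  have hcs : HasCompactSupport (fun z => ∑ i, (A g i)⁻¹ * pdR i (pdR i φ) z) := by
    have h : ∀ i, HasCompactSupport (fun z => (A g i)⁻¹ * pdR i (pdR i φ) z) := fun i =>
      (pdR_supp (pdR_supp hc i) i).mul_left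
    simp only [Fin.sum_univ_three]
    exact ((h 0).add (h 1)).add (h 2)
  have h1 := lhs_tendsto ha hcont hcs
  have h2 := (rhs_tendsto ha hg.continuous hc).neg
  rw [integral_mul_const, const_int (by linarith)] at h2
  refine tendsto_nhds_unique h1 (h2.congr' ?_)
  filter_upwards [self_mem_nhdsWithin] with ε he
  have he : 0 < ε := he
  rw [reg ha (by positivity) hg hc, rhs_scale he]

lemma conv_pdR {K f : (Fin 3 → ℝ) → ℝ} (hK : LocallyIntegrable K)
    (hf : ContDiff ℝ (⊤ : ℕ∞) f) (hc : HasCompactSupport f) (c : ℝ) (i : Fin 3) :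
    pdR i (fun x => c * ∫ z, K z * f (x - z)) = fun x => c * ∫ z, K z * pdR i f (x - z) := by
  ext x
  have h := (hc.hasFDerivAt_convolution_right (ContinuousLinearMap.mul ℝ ℝ) hK
    (hf.of_le (by simp)) x).const_mul c
  have h2 := convolution_precompR_apply (ContinuousLinearMap.mul ℝ ℝ) hK (hc.fderiv ℝ)
    (hf.continuous_fderiv (by simp)) x (Pi.single i 1)
  have h3 : HasFDerivAt (fun x => c * ∫ z, K z * f (x - z)) _ x := h
  unfold pdR
  rw [h3.fderiv]
  exact congrArg (fun t => c * t) h2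

lemma shift_pdR (f : (Fin 3 → ℝ) → ℝ) (hf : ContDiff ℝ (⊤ : ℕ∞) f) (c : ℝ) (x : Fin 3 → ℝ)
    (i : Fin 3) : pdR i (fun z => c * f (x - z)) = fun z => -c * pdR i f (x - z) := by
  ext z
  have h := (hf.differentiable (by simp) (x - z)).hasFDerivAt
  have h1 := (h.comp z ((hasFDerivAt_id z).const_sub x)).const_mul c
  have h3 : HasFDerivAt (fun z => c * f (x - z)) _ z := h1
  unfold pdR
  rw [h3.fderiv]
  simp

end Coul

/-- The anisotropic Coulomb potential
`u(x) = (γ/(4π)) ∫ ρ(y)/√(γ²(x₁-y₁)² + (x₂-y₂)² + (x₃-y₃)²) dy`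
of a smooth compactly supported density `ρ` is `C²` and solves
`(-Δ + v²∂₁²) u = ρ`. -/
theorem anisotropic_coulomb_solves (rho : (Fin 3 → ℝ) → ℝ)
    (hrho : ContDiff ℝ (⊤ : ℕ∞) rho) (hsupp : HasCompactSupport rho)
    (v : ℝ) (hv0 : 0 ≤ v) (hv1 : v < 1)
    (u : (Fin 3 → ℝ) → ℝ)
    (hu : ∀ x : Fin 3 → ℝ,
      u x = ((1 / Real.sqrt (1 - v ^ 2)) / (4 * Real.pi)) *
        ∫ y : Fin 3 → ℝ, rho y /
          Real.sqrt ((1 / Real.sqrt (1 - v ^ 2)) ^ 2 * (x 0 - y 0) ^ 2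
            + (x 1 - y 1) ^ 2 + (x 2 - y 2) ^ 2)) :
    ContDiff ℝ 2 u ∧
    ∀ x : Fin 3 → ℝ,
      -(pdR 0 (pdR 0 u) x + pdR 1 (pdR 1 u) x + pdR 2 (pdR 2 u) x)
        + v ^ 2 * pdR 0 (pdR 0 u) x = rho x := by
  have hv2 : 0 < 1 - v ^ 2 := by nlinarith
  have hspos : 0 < √(1 - v ^ 2) := Real.sqrt_pos.2 hv2
  have hg1 : 1 ≤ 1 / √(1 - v ^ 2) := by
    rw [le_div_iff₀ hspos, one_mul]
    exact Real.sqrt_le_one.2 (by nlinarith)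
  have hgsq : ((1 / √(1 - v ^ 2)) ^ 2)⁻¹ = 1 - v ^ 2 := by
    rw [div_pow, Real.sq_sqrt hv2.le]; simp
  generalize 1 / √(1 - v ^ 2) = g at *
  have hg0 : 0 < g := by linarith
  have ha : ∀ i, 1 ≤ Coul.A g i := by
    intro i
    fin_cases i <;> simp [Coul.A]
    exact hg1.trans (le_abs_self g)
  have hK := Coul.K_locInt ha
  set K : (Fin 3 → ℝ) → ℝ := fun z => (√(Coul.Q (Coul.A g) z))⁻¹ with hKdef
  set c := g / (4 * Real.pi) with hcdef
  have hu' : u = fun x => c * ∫ z, K z * rho (x - z) := by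
    ext x
    rw [hu, ← integral_sub_left_eq_self (fun z => K z * rho (x - z)) volume x]
    congr 2
    ext y
    simp [hKdef, Coul.Q, Coul.A, Fin.sum_univ_three, div_eq_mul_inv, mul_comm]
  have hpp : ∀ i, pdR i (pdR i u) = fun x => c * ∫ z, K z * pdR i (pdR i rho) (x - z) := by
    intro i
    rw [hu', Coul.conv_pdR hK hrho hsupp,
      Coul.conv_pdR hK (Coul.pdR_contDiff hrho i) (Coul.pdR_supp hsupp i)]
  constructor
  · rw [hu']
    have := hsupp.contDiff_convolution_right (n := 2) (ContinuousLinearMap.mul ℝ ℝ) hK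
      (hrho.of_le (by exact_mod_cast le_top))
    exact contDiff_const.mul this
  · intro x
    have hφ : ContDiff ℝ (⊤ : ℕ∞) (fun z => 1 * rho (x - z)) := by fun_prop
    have hφc : HasCompactSupport (fun z => 1 * rho (x - z)) := by
      simp only [one_mul]
      exact hsupp.comp_homeomorph (Homeomorph.subLeft x)
    have hf := Coul.fund hg1 hφ hφc
    have hint : ∀ i, Integrable (fun z => K z * pdR i (pdR i rho) (x - z)) := by
      intro i
      have h1 := (Coul.pdR_contDiff (Coul.pdR_contDiff hrho i) i).continuous
      have h2 : HasCompactSupport (fun z => pdR i (pdR i rho) (x - z)) :=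
        (Coul.pdR_supp (Coul.pdR_supp hsupp i) i).comp_homeomorph (Homeomorph.subLeft x)
      have := hK.integrable_smul_left_of_hasCompactSupport
        (h1.comp (continuous_const.sub continuous_id : Continuous fun z => x - z)) h2
      simpa [mul_comm] using this
    have hsh : ∀ i, pdR i (pdR i (fun z => 1 * rho (x - z)))
        = fun z => pdR i (pdR i rho) (x - z) := by
      intro i
      rw [Coul.shift_pdR rho hrho, Coul.shift_pdR _ (Coul.pdR_contDiff hrho i)]
      simp
    simp_rw [hsh] at hf
    have hsplit : ∫ z, K z * ∑ i, (Coul.A g i)⁻¹ * pdR i (pdR i rho) (x - z)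
        = ∑ i, (Coul.A g i)⁻¹ * ∫ z, K z * pdR i (pdR i rho) (x - z) := by
      simp_rw [← integral_const_mul]
      rw [← integral_finsetSum _ fun i _ => (hint i).const_mul _]
      congr 1; ext z; rw [Finset.mul_sum]; congr 1; ext i; ring
    have hf2 := hsplit.symm.trans hf
    simp only [Fin.sum_univ_three] at hf2
    have a0 : (Coul.A g 0)⁻¹ = 1 - v ^ 2 := by rw [← hgsq]; simp [Coul.A]
    have a1 : (Coul.A g 1)⁻¹ = 1 := by simp [Coul.A]
    have a2 : (Coul.A g 2)⁻¹ = 1 := by simp [Coul.A]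
    rw [a0, a1, a2, sub_zero] at hf2
    have hcc : c * (4 * Real.pi / g) = 1 := by
      rw [hcdef]; have := Real.pi_pos; field_simp
    simp only [hpp]
    linear_combination (-c) * hf2 + rho x * hcc
end

section
/- Let ρ : ℝ³ → ℝ be continuous with support contained in the closed ball of radius R centered at 0, and suppose all moments of ρ up to order 4 vanish: ∫_{ℝ³} y^α ρ(y) dy = 0 for every multi-index α with |α| ≤ 4. Let 0 ≤ v < 1, γ = (1 − v²)^{−1/2}, and define u(x) = (γ/(4π))·∫_{ℝ³} ρ(y)/√(γ²(x₁−y₁)² + (x₂−y₂)² + (x₃−y₃)²) dy. Then there exists a constant C such that |u(x)| ≤ C·(1 + |x|)^{−6} for all x ∈ ℝ³. -/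
open MeasureTheory

namespace CoulombAux

/-- Partial sum of the Legendre generating function, in weighted variables. -/
noncomputable def leg (b k : ℝ) : ℝ :=
  1 + b + (3 * b ^ 2 - k) / 2 + (5 * b ^ 3 - 3 * b * k) / 2
    + (35 * b ^ 4 - 30 * b ^ 2 * k + 3 * k ^ 2) / 8

noncomputable def tail (e b k : ℝ) : ℝ :=
  (35/2)*b^3*k + (-15/4)*b*k^2 + (-63/4)*b^5 + (175/8)*e*b^4*k + (-75/8)*e*b^2*k^2
  + (5/8)*e*k^3 + (-105/8)*e*b^6 + (245/8)*e^2*b^5*k + (-125/8)*e^2*b^3*k^2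
  + (15/8)*e^2*b*k^3 + (-135/8)*e^2*b^7 + (805/16)*e^3*b^6*k + (-1025/32)*e^3*b^4*k^2
  + (105/16)*e^3*b^2*k^3 + (-15/64)*e^3*k^4 + (-1575/64)*e^3*b^8 + (175/2)*e^4*b^7*k
  + (-1065/16)*e^4*b^5*k^2 + (75/4)*e^4*b^3*k^3 + (-45/32)*e^4*b*k^4 + (-1225/32)*e^4*b^9
  + (1225/64)*e^5*b^8*k + (-525/16)*e^5*b^6*k^2 + (555/32)*e^5*b^4*k^3
  + (-45/16)*e^5*b^2*k^4 + (9/64)*e^5*k^5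

lemma leg_identity (e b k : ℝ) :
    leg (e * b) (e ^ 2 * k) ^ 2 * (1 - 2 * (e * b) + e ^ 2 * k) - 1 = e ^ 5 * tail e b k := by
  unfold leg tail; ring

lemma tail_bound : ∃ C : ℝ, 0 ≤ C ∧ ∀ e b k : ℝ, |e| ≤ 1 → |b| ≤ 1 → |k| ≤ 1 →
    |tail e b k| ≤ C := by
  have hc : IsCompact (Set.Icc (-1 : ℝ) 1 ×ˢ (Set.Icc (-1 : ℝ) 1 ×ˢ Set.Icc (-1 : ℝ) 1)) :=
    isCompact_Icc.prod (isCompact_Icc.prod isCompact_Icc)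
  obtain ⟨C, hC⟩ := hc.exists_bound_of_continuousOn
    (f := fun p : ℝ × ℝ × ℝ => tail p.1 p.2.1 p.2.2) (by
      unfold tail; exact Continuous.continuousOn (by fun_prop))
  refine ⟨max C 0, le_max_right _ _, fun e b k he hb hk => ?_⟩
  refine le_trans ?_ (le_max_left _ _)
  exact hC (e, b, k) ⟨abs_le.1 he, abs_le.1 hb, abs_le.1 hk⟩

lemma leg_approx : ∃ C : ℝ, 0 ≤ C ∧ ∀ e b k : ℝ, 0 ≤ e → e ≤ 1 / 20 → |b| ≤ e → |k| ≤ e ^ 2 →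
    |1 / Real.sqrt (1 - 2 * b + k) - leg b k| ≤ C * e ^ 5 := by
  obtain ⟨C, hC0, hC⟩ := tail_bound
  refine ⟨4 * C, by positivity, fun e b k he he1 hb hk => ?_⟩
  rcases he.eq_or_lt with h0 | hpos
  · subst h0
    have hb0 : b = 0 := by simpa using hb
    have hk0 : k = 0 := by simpa using hk
    subst hb0 hk0
    simp [leg]
  have hid := leg_identity e (b / e) (k / e ^ 2)
  rw [mul_div_cancel₀ b hpos.ne', mul_div_cancel₀ k (by positivity : e ^ 2 ≠ 0)] at hid
  have hT : |tail e (b / e) (k / e ^ 2)| ≤ C := by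
    apply hC
    · rw [abs_of_pos hpos]; linarith
    · rw [abs_div, abs_of_pos hpos]; exact (div_le_one hpos).2 hb
    · rw [abs_div, abs_of_pos (by positivity : 0 < e ^ 2)]
      exact (div_le_one (by positivity)).2 hk
  have he2 : e ^ 2 ≤ 1 / 400 := by nlinarith
  have hb1 := abs_le.1 (hb.trans he1)
  have hk1 := abs_le.1 (hk.trans he2)
  have hw1 : 1 / 2 ≤ 1 - 2 * b + k := by linarith [hb1.2, hk1.1]
  have hw2 : 1 - 2 * b + k ≤ 4 := by linarith [hb1.1, hk1.2]
  set w := 1 - 2 * b + k with hw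
  have hP : 0 ≤ leg b k := by
    have e1 : |b ^ 3| ≤ 1 / 20 := by
      rw [abs_pow]
      calc |b| ^ 3 ≤ (1 / 20) ^ 3 := by gcongr; exact hb.trans he1
        _ ≤ _ := by norm_num
    have e2 : |b * k| ≤ 1 / 20 := by
      rw [abs_mul]
      calc |b| * |k| ≤ (1 / 20) * (1 / 400) := by
            gcongr
            · exact hb.trans he1
            · exact hk.trans he2
        _ ≤ _ := by norm_num
    have e3 : |b ^ 2 * k| ≤ 1 / 100 := by
      rw [abs_mul, abs_pow]
      calc |b| ^ 2 * |k| ≤ (1 / 20) ^ 2 * (1 / 400) := by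
            gcongr
            · exact hb.trans he1
            · exact hk.trans he2
        _ ≤ _ := by norm_num
    have e1' := abs_le.1 e1
    have e2' := abs_le.1 e2
    have e3' := abs_le.1 e3
    have e4 : 0 ≤ b ^ 2 := by positivity
    have e5 : 0 ≤ b ^ 4 := by positivity
    have e6 : 0 ≤ k ^ 2 := by positivity
    unfold leg
    linarith [hb1.1, hk1.2, e1'.1, e2'.2, e3'.2]
  have hwpos : 0 < w := by linarith
  have hsp : 0 < Real.sqrt w := Real.sqrt_pos.2 hwpos
  have hs2 : Real.sqrt w ≤ 2 := by
    rw [Real.sqrt_le_left (by norm_num)]; linarith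
  have hq : 1 / 2 ≤ 1 / Real.sqrt w := one_div_le_one_div_of_le hsp hs2
  set q := 1 / Real.sqrt w with hqd
  have hq2 : q ^ 2 = 1 / w := by
    rw [hqd, div_pow, Real.sq_sqrt hwpos.le, one_pow]
  have hprod : (q - leg b k) * (q + leg b k) = -(e ^ 5 * tail e (b / e) (k / e ^ 2)) / w := by
    rw [← hid]
    have : (q - leg b k) * (q + leg b k) = q ^ 2 - leg b k ^ 2 := by ring
    rw [this, hq2]
    field_simp
    ring
  have h1 : |q - leg b k| * (q + leg b k) ≤ 2 * (C * e ^ 5) := by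
    rw [← abs_of_nonneg (by linarith : 0 ≤ q + leg b k), ← abs_mul, hprod, abs_div, abs_neg,
      abs_mul, abs_of_pos hwpos, abs_of_pos (by positivity : 0 < e ^ 5), div_le_iff₀ hwpos]
    have : e ^ 5 * |tail e (b / e) (k / e ^ 2)| ≤ e ^ 5 * C := by gcongr
    nlinarith [mul_nonneg hC0 (by positivity : 0 ≤ e ^ 5)]
  nlinarith [abs_nonneg (q - leg b k)]

abbrev E3 := EuclideanSpace ℝ (Fin 3)

/-- The anisotropic bilinear form. -/
def bil (g : ℝ) (x y : E3) : ℝ := g ^ 2 * (x 0 * y 0) + x 1 * y 1 + x 2 * y 2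

lemma normsq (x : E3) : ‖x‖ ^ 2 = x 0 ^ 2 + x 1 ^ 2 + x 2 ^ 2 := by
  rw [EuclideanSpace.norm_sq_eq, Fin.sum_univ_three]; simp

lemma bil_lower (g : ℝ) (hg : 1 ≤ g) (x : E3) : ‖x‖ ^ 2 ≤ bil g x x := by
  rw [normsq]; unfold bil
  have : 1 ≤ g ^ 2 := by nlinarith
  nlinarith [sq_nonneg (x 0)]

lemma bil_upper (g : ℝ) (hg : 1 ≤ g) (x : E3) : bil g x x ≤ g ^ 2 * ‖x‖ ^ 2 := by
  rw [normsq]; unfold bil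
  have : 1 ≤ g ^ 2 := by nlinarith
  nlinarith [sq_nonneg (x 1), sq_nonneg (x 2)]

lemma bil_cs (g : ℝ) (x y : E3) : bil g x y ^ 2 ≤ bil g x x * bil g y y := by
  unfold bil
  nlinarith [sq_nonneg (g * (x 0 * y 1 - x 1 * y 0)), sq_nonneg (g * (x 0 * y 2 - x 2 * y 0)),
    sq_nonneg (x 1 * y 2 - x 2 * y 1)]

lemma bil_sub (g : ℝ) (x y : E3) :
    g ^ 2 * (x 0 - y 0) ^ 2 + (x 1 - y 1) ^ 2 + (x 2 - y 2) ^ 2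
      = bil g x x - 2 * bil g x y + bil g y y := by
  unfold bil; ring

lemma kernel_approx : ∃ C : ℝ, 0 ≤ C ∧ ∀ (g r : ℝ) (x y : E3), 1 ≤ g → 1 ≤ r → ‖y‖ ≤ r →
    20 * (g * r) ≤ ‖x‖ →
    |1 / Real.sqrt (g ^ 2 * (x 0 - y 0) ^ 2 + (x 1 - y 1) ^ 2 + (x 2 - y 2) ^ 2)
      - leg (bil g x y / bil g x x) (bil g y y / bil g x x) / Real.sqrt (bil g x x)|
      ≤ C * (g * r) ^ 5 / ‖x‖ ^ 6 := by
  obtain ⟨C, hC0, hC⟩ := leg_approx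
  refine ⟨C, hC0, fun g r x y hg hr hy hx => ?_⟩
  have hgr : 1 ≤ g * r := by nlinarith
  have hxp : 0 < ‖x‖ := by linarith
  have hNl := bil_lower g hg x
  have hNp : 0 < bil g x x := lt_of_lt_of_le (by positivity) hNl
  have hyu : bil g y y ≤ (g * r) ^ 2 := by
    refine (bil_upper g hg y).trans ?_
    rw [mul_pow]; gcongr
  have hyl : 0 ≤ bil g y y := le_trans (by positivity) (bil_lower g hg y)
  have hcs := bil_cs g x y
  rw [bil_sub]
  have hfac : bil g x x - 2 * bil g x y + bil g y y
      = bil g x x * (1 - 2 * (bil g x y / bil g x x) + bil g y y / bil g x x) := by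
    field_simp
  rw [hfac, Real.sqrt_mul hNp.le]
  set N := bil g x x
  set S := Real.sqrt N with hS
  have hSp : 0 < S := Real.sqrt_pos.2 hNp
  have hSN : S ^ 2 = N := Real.sq_sqrt hNp.le
  have hxS : ‖x‖ ≤ S := Real.le_sqrt_of_sq_le hNl
  have key := hC (g * r / S) (bil g x y / N) (bil g y y / N) (by positivity)
    (by rw [div_le_div_iff₀ hSp (by norm_num)]; linarith)
    (by
      rw [abs_div, abs_of_pos hNp, ← hSN, div_le_div_iff₀ (by positivity) hSp]
      have : |bil g x y| ≤ S * (g * r) := by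
        apply abs_le_of_sq_le_sq _ (by positivity)
        calc _ ≤ _ := hcs
          _ ≤ N * (g * r) ^ 2 := by gcongr
          _ = _ := by rw [← hSN]; ring
      calc |bil g x y| * S ≤ S * (g * r) * S := by gcongr
        _ = _ := by ring)
    (by
      rw [abs_div, abs_of_pos hNp, abs_of_nonneg hyl, div_pow, hSN]
      gcongr)
  rw [mul_comm S, ← div_div, ← sub_div, abs_div, abs_of_pos hSp]
  calc _ ≤ C * (g * r / S) ^ 5 / S := by gcongr
    _ = C * (g * r) ^ 5 / S ^ 6 := by field_simp
    _ ≤ _ := by gcongr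

open MvPolynomial in
lemma poly_moment (rho : E3 → ℝ) (hrho : Continuous rho) (hcs : HasCompactSupport rho)
    (hmom : ∀ α : Fin 3 → ℕ, α 0 + α 1 + α 2 ≤ 4 →
      (∫ y : E3, (y 0) ^ (α 0) * (y 1) ^ (α 1) * (y 2) ^ (α 2) * rho y) = 0)
    (p : MvPolynomial (Fin 3) ℝ) (hp : p.totalDegree ≤ 4) :
    ∫ y : E3, eval (fun i => y i) p * rho y = 0 := by
  simp_rw [eval_eq', Finset.sum_mul]
  rw [integral_finsetSum]
  · apply Finset.sum_eq_zero
    intro d hd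
    have h1 := (le_totalDegree hd).trans hp
    rw [Finsupp.sum_fintype _ _ (by simp), Fin.sum_univ_three] at h1
    have := hmom d h1
    simp_rw [Fin.prod_univ_three, mul_assoc (coeff d p)]
    rw [integral_const_mul, this, mul_zero]
  · intro d hd
    apply Continuous.integrable_of_hasCompactSupport
    · fun_prop
    · exact hcs.mul_left

open MvPolynomial in
lemma leg_moment (rho : E3 → ℝ) (hrho : Continuous rho) (hcs : HasCompactSupport rho)
    (hmom : ∀ α : Fin 3 → ℕ, α 0 + α 1 + α 2 ≤ 4 →
      (∫ y : E3, (y 0) ^ (α 0) * (y 1) ^ (α 1) * (y 2) ^ (α 2) * rho y) = 0)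
    (g N : ℝ) (x : E3) :
    ∫ y : E3, leg (bil g x y / N) (bil g y y / N) * rho y = 0 := by
  let b : MvPolynomial (Fin 3) ℝ :=
    C (g ^ 2 * x 0 / N) * X 0 + C (x 1 / N) * X 1 + C (x 2 / N) * X 2
  let k : MvPolynomial (Fin 3) ℝ :=
    C (g ^ 2 / N) * X 0 ^ 2 + C (1 / N) * X 1 ^ 2 + C (1 / N) * X 2 ^ 2
  have hadd : ∀ (n : ℕ) (p q : MvPolynomial (Fin 3) ℝ), p.totalDegree ≤ n → q.totalDegree ≤ n →
      (p + q).totalDegree ≤ n := fun n p q h1 h2 =>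
    (totalDegree_add p q).trans (max_le h1 h2)
  have hmul : ∀ (m n l : ℕ) (p q : MvPolynomial (Fin 3) ℝ), p.totalDegree ≤ m →
      q.totalDegree ≤ n → m + n ≤ l → (p * q).totalDegree ≤ l := fun m n l p q h1 h2 h3 =>
    (totalDegree_mul p q).trans (by omega)
  have hpow : ∀ (m n l : ℕ) (p : MvPolynomial (Fin 3) ℝ), p.totalDegree ≤ m → n * m ≤ l →
      (p ^ n).totalDegree ≤ l := fun m n l p h1 h3 =>
    (totalDegree_pow p n).trans ((Nat.mul_le_mul_left n h1).trans h3)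
  have hC : ∀ (c : ℝ) (n : ℕ), (C c : MvPolynomial (Fin 3) ℝ).totalDegree ≤ n := fun c n => by
    simp
  have hX : ∀ (i : Fin 3), (X i : MvPolynomial (Fin 3) ℝ).totalDegree ≤ 1 := fun i => by simp
  have hb : b.totalDegree ≤ 1 := by
    refine hadd _ _ _ (hadd _ _ _ ?_ ?_) ?_ <;> exact hmul 0 1 1 _ _ (hC _ _) (hX _) le_rfl
  have hk : k.totalDegree ≤ 2 := by
    refine hadd _ _ _ (hadd _ _ _ ?_ ?_) ?_ <;>
      exact hmul 0 2 2 _ _ (hC _ _) (hpow 1 2 2 _ (hX _) le_rfl) le_rfl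
  have hs : ∀ (c : ℝ) (i j : ℕ), i + 2 * j ≤ 4 → (C c * (b ^ i * k ^ j)).totalDegree ≤ 4 :=
    fun c i j hij => hmul 0 4 4 _ _ (hC _ _)
      (hmul i (2 * j) 4 _ _ (hpow 1 i _ _ hb (by omega)) (hpow 2 j _ _ hk (by omega)) hij) le_rfl
  let p : MvPolynomial (Fin 3) ℝ :=
    C 1 * (b ^ 0 * k ^ 0) + C 1 * (b ^ 1 * k ^ 0) + C (3 / 2) * (b ^ 2 * k ^ 0)
      + C (-1 / 2) * (b ^ 0 * k ^ 1) + C (5 / 2) * (b ^ 3 * k ^ 0) + C (-3 / 2) * (b ^ 1 * k ^ 1)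
      + C (35 / 8) * (b ^ 4 * k ^ 0) + C (-30 / 8) * (b ^ 2 * k ^ 1) + C (3 / 8) * (b ^ 0 * k ^ 2)
  have hp : p.totalDegree ≤ 4 := by
    refine hadd _ _ _ (hadd _ _ _ (hadd _ _ _ (hadd _ _ _ (hadd _ _ _ (hadd _ _ _
      (hadd _ _ _ (hadd _ _ _ ?_ ?_) ?_) ?_) ?_) ?_) ?_) ?_) ?_ <;> exact hs _ _ _ (by norm_num)
  rw [← poly_moment rho hrho hcs hmom p hp]
  congr 1
  ext y
  congr 1
  have eb : eval (fun i => y i) b = bil g x y / N := by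
    simp only [b, bil, map_add, map_mul, eval_C, eval_X]; ring
  have ek : eval (fun i => y i) k = bil g y y / N := by
    simp only [k, bil, map_add, map_mul, map_pow, eval_C, eval_X]; ring
  simp only [p, map_add, map_mul, map_pow, eval_C, eb, ek, leg]
  ring

lemma potential_continuous (rho : E3 → ℝ) (hrho : Continuous rho) (hcs : HasCompactSupport rho)
    (g : ℝ) (hg : 1 ≤ g) :
    Continuous (fun x : E3 => ∫ y : E3, rho y /
      Real.sqrt (g ^ 2 * (x 0 - y 0) ^ 2 + (x 1 - y 1) ^ 2 + (x 2 - y 2) ^ 2)) := by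
  have hK : LocallyIntegrable (fun z : E3 => (Real.sqrt (bil g z z))⁻¹) volume := by
    refine locallyIntegrable_of_norm_le_rpow (C := 1) (α := 1) ?_ ?_ ?_ ?_
    · simp
    · simp
    · filter_upwards with z
      rw [Real.rpow_neg_one, one_mul, norm_inv, Real.norm_of_nonneg (Real.sqrt_nonneg _)]
      rcases (norm_nonneg z).eq_or_lt with h | h
      · have : z = 0 := by simpa using h.symm
        subst this
        simp [bil]
      · exact inv_anti₀ h (Real.le_sqrt_of_sq_le (bil_lower g hg z))
    · apply Measurable.aestronglyMeasurable
      unfold bil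
      fun_prop
  have := hcs.continuous_convolution_left (ContinuousLinearMap.mul ℝ ℝ) hrho hK
  convert this using 2 with x
  unfold convolution
  congr 1
  ext y
  simp only [ContinuousLinearMap.mul_apply', div_eq_mul_inv, bil, PiLp.sub_apply]
  ring_nf

lemma far_bound (rho : E3 → ℝ) (hrho : Continuous rho) (hcs : HasCompactSupport rho)
    (hmom : ∀ α : Fin 3 → ℕ, α 0 + α 1 + α 2 ≤ 4 →
      (∫ y : E3, (y 0) ^ (α 0) * (y 1) ^ (α 1) * (y 2) ^ (α 2) * rho y) = 0)
    (g r : ℝ) (hg : 1 ≤ g) (hr : 1 ≤ r) (hsupp : ∀ y, rho y ≠ 0 → ‖y‖ ≤ r) :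
    ∃ C : ℝ, 0 ≤ C ∧ ∀ x : E3, 20 * (g * r) ≤ ‖x‖ →
      |∫ y : E3, rho y /
        Real.sqrt (g ^ 2 * (x 0 - y 0) ^ 2 + (x 1 - y 1) ^ 2 + (x 2 - y 2) ^ 2)|
        ≤ C / ‖x‖ ^ 6 := by
  obtain ⟨C, hC0, hC⟩ := kernel_approx
  have hri : Integrable rho := hrho.integrable_of_hasCompactSupport hcs
  refine ⟨C * (g * r) ^ 5 * ∫ y, |rho y|, by positivity, fun x hx => ?_⟩
  have hlint : Integrable (fun y : E3 =>
      leg (bil g x y / bil g x x) (bil g y y / bil g x x) * rho y) := by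
    apply Continuous.integrable_of_hasCompactSupport
    · unfold leg bil; fun_prop
    · exact hcs.mul_left
  have hl0 := leg_moment rho hrho hcs hmom g (bil g x x) x
  have hpt : ∀ y : E3, |rho y /
        Real.sqrt (g ^ 2 * (x 0 - y 0) ^ 2 + (x 1 - y 1) ^ 2 + (x 2 - y 2) ^ 2)
        - leg (bil g x y / bil g x x) (bil g y y / bil g x x) * rho y / Real.sqrt (bil g x x)|
        ≤ C * (g * r) ^ 5 / ‖x‖ ^ 6 * |rho y| := by
    intro y
    by_cases h : rho y = 0
    · simp [h]
    · have := hC g r x y hg hr (hsupp y h) hx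
      calc _ = |(1 / Real.sqrt (g ^ 2 * (x 0 - y 0) ^ 2 + (x 1 - y 1) ^ 2 + (x 2 - y 2) ^ 2)
        - leg (bil g x y / bil g x x) (bil g y y / bil g x x) / Real.sqrt (bil g x x)) * rho y| := by
            congr 1; ring
        _ ≤ _ := by rw [abs_mul]; gcongr
  have hbi : Integrable (fun y => C * (g * r) ^ 5 / ‖x‖ ^ 6 * |rho y|) := hri.abs.const_mul _
  have hdi : Integrable (fun y : E3 => rho y /
        Real.sqrt (g ^ 2 * (x 0 - y 0) ^ 2 + (x 1 - y 1) ^ 2 + (x 2 - y 2) ^ 2)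
        - leg (bil g x y / bil g x x) (bil g y y / bil g x x) * rho y
          / Real.sqrt (bil g x x)) := by
    refine hbi.mono' ?_ (Filter.Eventually.of_forall hpt)
    apply Measurable.aestronglyMeasurable
    have := hrho.measurable
    unfold leg bil
    fun_prop
  have heq : ∫ y : E3, rho y /
        Real.sqrt (g ^ 2 * (x 0 - y 0) ^ 2 + (x 1 - y 1) ^ 2 + (x 2 - y 2) ^ 2)
      = ∫ y : E3, (rho y /
        Real.sqrt (g ^ 2 * (x 0 - y 0) ^ 2 + (x 1 - y 1) ^ 2 + (x 2 - y 2) ^ 2)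
        - leg (bil g x y / bil g x x) (bil g y y / bil g x x) * rho y
          / Real.sqrt (bil g x x)) := by
    have h1 := integral_add hdi (hlint.div_const (Real.sqrt (bil g x x)))
    rw [integral_div, hl0, zero_div, add_zero] at h1
    rw [← h1]
    congr 1
    ext y
    ring
  rw [heq]
  rw [← Real.norm_eq_abs]
  refine (norm_integral_le_of_norm_le hbi (Filter.Eventually.of_forall fun y => ?_)).trans ?_
  · rw [Real.norm_eq_abs]; exact hpt y
  rw [integral_const_mul]
  exact le_of_eq (by ring)

end CoulombAux

/-- Decay `|u(x)| ≤ C (1+|x|)^{-6}` of the anisotropic Coulomb potential of a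
compactly supported continuous density whose moments up to order `4` vanish. -/
theorem anisotropic_coulomb_decay_six (rho : EuclideanSpace ℝ (Fin 3) → ℝ)
    (hrho : Continuous rho) (R : ℝ)
    (hsupp : Function.support rho ⊆ Metric.closedBall (0 : EuclideanSpace ℝ (Fin 3)) R)
    (hmom : ∀ α : Fin 3 → ℕ, α 0 + α 1 + α 2 ≤ 4 →
      (∫ y : EuclideanSpace ℝ (Fin 3),
        (y 0) ^ (α 0) * (y 1) ^ (α 1) * (y 2) ^ (α 2) * rho y) = 0)
    (v : ℝ) (hv0 : 0 ≤ v) (hv1 : v < 1)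
    (u : EuclideanSpace ℝ (Fin 3) → ℝ)
    (hu : ∀ x : EuclideanSpace ℝ (Fin 3),
      u x = ((1 / Real.sqrt (1 - v ^ 2)) / (4 * Real.pi)) *
        ∫ y : EuclideanSpace ℝ (Fin 3), rho y /
          Real.sqrt ((1 / Real.sqrt (1 - v ^ 2)) ^ 2 * (x 0 - y 0) ^ 2
            + (x 1 - y 1) ^ 2 + (x 2 - y 2) ^ 2)) :
    ∃ C : ℝ, ∀ x : EuclideanSpace ℝ (Fin 3), |u x| ≤ C / (1 + ‖x‖) ^ 6 := by
  have hcs : HasCompactSupport rho :=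
    HasCompactSupport.of_support_subset_isCompact (isCompact_closedBall _ _) hsupp
  have hg : 1 ≤ 1 / Real.sqrt (1 - v ^ 2) := by
    rw [le_div_iff₀ (Real.sqrt_pos.2 (by nlinarith)), one_mul, Real.sqrt_le_left (by norm_num)]
    nlinarith
  set g := 1 / Real.sqrt (1 - v ^ 2) with hgd
  have hs : ∀ y, rho y ≠ 0 → ‖y‖ ≤ max R 1 := fun y hy =>
    le_trans (by simpa using hsupp (Function.mem_support.2 hy)) (le_max_left _ _)
  obtain ⟨C1, hC10, hC1⟩ := CoulombAux.far_bound rho hrho hcs hmom g (max R 1) hg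
    (le_max_right _ _) hs
  have hr : 1 ≤ max R 1 := le_max_right _ _
  generalize max R 1 = r at *
  have hgr : 1 ≤ g * r := by nlinarith
  have hcont := CoulombAux.potential_continuous rho hrho hcs g hg
  obtain ⟨C2, hC2⟩ := (isCompact_closedBall (0 : EuclideanSpace ℝ (Fin 3))
    (20 * (g * r))).exists_bound_of_continuousOn hcont.continuousOn
  have hA : 0 ≤ g / (4 * Real.pi) := by positivity
  have hC20 : 0 ≤ C2 := (norm_nonneg _).trans (hC2 0 (by simp; positivity))
  refine ⟨g / (4 * Real.pi) * (C1 * 2 ^ 6 + C2 * (1 + 20 * (g * r)) ^ 6), fun x => ?_⟩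
  rw [hu, abs_mul, abs_of_nonneg hA, mul_div_assoc]
  refine mul_le_mul_of_nonneg_left ?_ hA
  have hx0 := norm_nonneg x
  rw [le_div_iff₀ (by positivity)]
  rcases le_total (20 * (g * r)) ‖x‖ with h | h
  · have hxp : 0 < ‖x‖ := by linarith
    calc _ ≤ C1 / ‖x‖ ^ 6 * (2 * ‖x‖) ^ 6 := by
          gcongr
          · exact hC1 x h
          · linarith
      _ = C1 * 2 ^ 6 := by field_simp
      _ ≤ _ := le_add_of_nonneg_right (by positivity)
  · calc _ ≤ C2 * (1 + 20 * (g * r)) ^ 6 := by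
          gcongr
          exact hC2 x (by simpa using h)
      _ ≤ _ := le_add_of_nonneg_left (by positivity)
end

section
/- Let ρ : ℝ³ → ℝ be continuous with support contained in the closed ball of radius R centered at 0, and suppose ∫_{ℝ³} y^α ρ(y) dy = 0 for every multi-index α with |α| ≤ 4. Let 0 ≤ v < 1, γ = (1 − v²)^{−1/2}, and define u(x) = (γ/(4π))·∫_{ℝ³} ρ(y)/√(γ²(x₁−y₁)² + (x₂−y₂)² + (x₃−y₃)²) dy. Then u is differentiable at every x with |x| > R, and there exists a constant C such that ‖∇u(x)‖ ≤ C·|x|^{−7} for all x with |x| ≥ 2R + 1. -/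
open MeasureTheory

section helpers
open Set Filter Topology
open scoped ContDiff Nat

lemma acg_line_deriv {E F : Type*} [NormedAddCommGroup E] [NormedSpace ℝ E]
    [NormedAddCommGroup F] [NormedSpace ℝ F] (f : E → F) (U : Set E) (hU : IsOpen U)
    (hf : ContDiffOn ℝ ∞ f U) (e z : E) (h : ∀ t ∈ Icc (0:ℝ) 1, e + t • z ∈ U) (k : ℕ) :
    ∀ t ∈ Icc (0:ℝ) 1, iteratedDerivWithin k (fun t : ℝ => f (e + t • z)) (Icc 0 1) t
      = iteratedFDeriv ℝ k f (e + t • z) (fun _ => z) := by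
  induction k with
  | zero => intro t ht; simp
  | succ k ih =>
    intro t ht
    rw [iteratedDerivWithin_succ, derivWithin_congr ih (ih t ht)]
    have hat : ContDiffAt ℝ ∞ f (e + t • z) := hf.contDiffAt (hU.mem_nhds (h t ht))
    have hd : DifferentiableAt ℝ (iteratedFDeriv ℝ k f) (e + t • z) :=
      hat.differentiableAt_iteratedFDeriv (by exact_mod_cast WithTop.coe_lt_top k)
    have h1 : HasDerivAt (fun t : ℝ => e + t • z) z t := by
      simpa using ((hasDerivAt_id t).smul_const z).const_add e
    have h2 := hd.hasFDerivAt.comp_hasDerivAt t h1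
    have h3 := ((ContinuousMultilinearMap.apply ℝ (fun _ : Fin k => E) F
      (fun _ => z)).hasFDerivAt).comp_hasDerivAt t h2
    have h4 := h3.hasDerivWithinAt.derivWithin (uniqueDiffOn_Icc (zero_lt_one' ℝ) t ht)
    rw [iteratedFDeriv_succ_apply_left]
    exact h4

lemma acg_taylor {E F : Type*} [NormedAddCommGroup E] [NormedSpace ℝ E]
    [NormedAddCommGroup F] [NormedSpace ℝ F] (f : E → F) (U : Set E) (hU : IsOpen U)
    (hf : ContDiffOn ℝ ∞ f U) (e z : E) (h : ∀ t ∈ Icc (0:ℝ) 1, e + t • z ∈ U) (M : ℝ)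
    (hM : ∀ t ∈ Icc (0:ℝ) 1, ‖iteratedFDeriv ℝ 5 f (e + t • z)‖ ≤ M) :
    ‖f (e + z) - ∑ k ∈ Finset.range 5, ((k ! : ℝ)⁻¹) • iteratedFDeriv ℝ k f e (fun _ => z)‖
      ≤ M * ‖z‖ ^ 5 / 24 := by
  have hc : ContDiffOn ℝ ((4:ℕ) + 1) (fun t : ℝ => f (e + t • z)) (Icc 0 1) := by
    have : ContDiffOn ℝ ∞ (fun t : ℝ => f (e + t • z)) (Icc 0 1) := by
      refine hf.comp (t := U) ?_ h
      fun_prop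
    have h5 : (((4 : ℕ) + 1 : ℕ∞) : WithTop ℕ∞) ≤ ∞ := WithTop.coe_le_coe.2 le_top
    exact this.of_le h5
  have := taylor_mean_remainder_bound (x := 1) (C := M * ‖z‖ ^ 5) zero_le_one hc (by simp) ?_
  · rw [taylor_within_apply] at this
    have h0 : ∀ k, iteratedDerivWithin k (fun t : ℝ => f (e + t • z)) (Icc 0 1) 0
        = iteratedFDeriv ℝ k f e (fun _ => z) := by
      intro k
      simpa using acg_line_deriv f U hU hf e z h k 0 (by simp)
    simp only [h0] at this
    simpa [Nat.factorial] using this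
  · intro t ht
    rw [acg_line_deriv f U hU hf e z h 5 t ht]
    refine (ContinuousMultilinearMap.le_opNorm _ _).trans ?_
    simp only [Finset.prod_const, Finset.card_univ, Fintype.card_fin]
    gcongr
    exact hM t ht

lemma acg_integrable {F : Type*} [NormedAddCommGroup F] [NormedSpace ℝ F]
    (rho : EuclideanSpace ℝ (Fin 3) → ℝ) (hrho : Continuous rho)
    (hs : HasCompactSupport rho) (g : EuclideanSpace ℝ (Fin 3) → F) (hg : Continuous g) :
    Integrable (fun y => rho y • g y) :=
  (hrho.smul hg).integrable_of_hasCompactSupport hs.smul_right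

lemma acg_moment {F : Type*} [NormedAddCommGroup F] [NormedSpace ℝ F] [CompleteSpace F]
    (rho : EuclideanSpace ℝ (Fin 3) → ℝ) (hrho : Continuous rho)
    (hs : HasCompactSupport rho)
    (hmom : ∀ α : Fin 3 → ℕ, α 0 + α 1 + α 2 ≤ 4 →
      (∫ y : EuclideanSpace ℝ (Fin 3),
        (y 0) ^ (α 0) * (y 1) ^ (α 1) * (y 2) ^ (α 2) * rho y) = 0)
    (k : ℕ) (hk : k ≤ 4)
    (P : ContinuousMultilinearMap ℝ (fun _ : Fin k => EuclideanSpace ℝ (Fin 3)) F) :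
    ∫ y, rho y • P (fun _ => y) = 0 := by
  classical
  let b := EuclideanSpace.basisFun (Fin 3) ℝ
  have hexp : ∀ y : EuclideanSpace ℝ (Fin 3), P (fun _ => y)
      = ∑ r : Fin k → Fin 3, (∏ i, y (r i)) • P (fun i => b (r i)) := by
    intro y
    have hy : y = ∑ j, y j • b j := by
      simpa [b] using ((EuclideanSpace.basisFun (Fin 3) ℝ).sum_repr y).symm
    conv_lhs => rw [hy]
    rw [ContinuousMultilinearMap.map_sum]
    refine Finset.sum_congr rfl fun r _ => ?_
    exact P.map_smul_univ (fun i => y (r i)) (fun i => b (r i))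
  simp only [hexp, Finset.smul_sum]
  rw [integral_finsetSum]
  · refine Finset.sum_eq_zero fun r _ => ?_
    simp only [← smul_assoc]
    rw [integral_smul_const]
    have hz : ∫ y : EuclideanSpace ℝ (Fin 3), rho y • ∏ i, y (r i) = 0 := by
      rw [← hmom (fun j => (Finset.univ.filter (fun i => r i = j)).card)]
      · congr 1
        ext y
        have : ∏ i, y (r i) = ∏ j, y j ^ (Finset.univ.filter (fun i => r i = j)).card := by
          simp_rw [← Finset.prod_const]
          exact (Finset.prod_fiberwise' Finset.univ r (fun j => y j)).symm
        rw [this, Fin.prod_univ_three, smul_eq_mul, mul_comm]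
      · have : ∑ j, (Finset.univ.filter (fun i => r i = j)).card = k := by
          have := Finset.card_eq_sum_card_fiberwise (s := Finset.univ) (t := Finset.univ) (f := r)
            (by simp)
          simpa using this.symm
        rw [Fin.sum_univ_three] at this
        omega
    rw [hz, zero_smul]
  · intro r _
    refine acg_integrable rho hrho hs _ ?_
    fun_prop

/-- The kernel, without the constant. -/
noncomputable def acgK (g : ℝ) (z : EuclideanSpace ℝ (Fin 3)) : ℝ :=
  1 / Real.sqrt (g ^ 2 * (z 0) ^ 2 + (z 1) ^ 2 + (z 2) ^ 2)

lemma acgK_pos (g : ℝ) (hg : 0 < g) (z : EuclideanSpace ℝ (Fin 3)) (hz : z ≠ 0) :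
    0 < g ^ 2 * (z 0) ^ 2 + (z 1) ^ 2 + (z 2) ^ 2 := by
  by_contra hcon
  apply hz
  have h0 : 0 ≤ g ^ 2 * (z 0) ^ 2 := by positivity
  have h1 := sq_nonneg (z 1)
  have h2 := sq_nonneg (z 2)
  have e0 : g ^ 2 * (z 0) ^ 2 = 0 := by linarith
  have e1 : z 1 ^ 2 = 0 := by linarith
  have e2 : z 2 ^ 2 = 0 := by linarith
  have e0' : z 0 = 0 := by
    have : g ^ 2 ≠ 0 := by positivity
    simpa [this, hg.ne'] using e0
  ext i
  fin_cases i
  · simpa using e0'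
  · simpa using e1
  · simpa using e2

lemma acgK_contDiffAt (g : ℝ) (hg : 0 < g) (z : EuclideanSpace ℝ (Fin 3)) (hz : z ≠ 0) :
    ContDiffAt ℝ ∞ (acgK g) z := by
  have hp := acgK_pos g hg z hz
  unfold acgK
  refine ContDiffAt.div contDiffAt_const (ContDiffAt.sqrt ?_ hp.ne') (Real.sqrt_pos.2 hp).ne'
  fun_prop

lemma acgK_measurable (g : ℝ) : Measurable (acgK g) := by
  unfold acgK
  fun_prop

lemma acgK_fderiv_contDiffOn (g : ℝ) (hg : 0 < g) :
    ContDiffOn ℝ ∞ (fderiv ℝ (acgK g)) {0}ᶜ := by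
  intro z hz
  exact ((acgK_contDiffAt g hg z hz).fderiv_right (m := ∞) (by simp)).contDiffWithinAt

lemma acgK_hom (g : ℝ) (r : ℝ) (hr : 0 < r) (z : EuclideanSpace ℝ (Fin 3)) :
    acgK g (r • z) = r⁻¹ * acgK g z := by
  unfold acgK
  have : g ^ 2 * ((r • z) 0) ^ 2 + ((r • z) 1) ^ 2 + ((r • z) 2) ^ 2
    = r ^ 2 * (g ^ 2 * (z 0) ^ 2 + (z 1) ^ 2 + (z 2) ^ 2) := by
    simp; ring
  rw [this, Real.sqrt_mul (by positivity), Real.sqrt_sq hr.le]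
  simp [mul_comm]

lemma acgK_fderiv_hom (g : ℝ) (hg : 0 < g) (r : ℝ) (hr : 0 < r)
    (z : EuclideanSpace ℝ (Fin 3)) (hz : z ≠ 0) :
    fderiv ℝ (acgK g) (r • z) = (r ^ 2)⁻¹ • fderiv ℝ (acgK g) z := by
  have h1 : fderiv ℝ (fun x => acgK g (r • x)) z = r • fderiv ℝ (acgK g) (r • z) :=
    fderiv_comp_smul r
  have h2 : (fun x => acgK g (r • x)) = fun x => r⁻¹ * acgK g x := by
    ext x; exact acgK_hom g r hr x
  rw [h2, fderiv_const_mul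
    ((acgK_contDiffAt g hg z hz).differentiableAt (by simp))] at h1
  have h3 : fderiv ℝ (acgK g) (r • z) = r⁻¹ • r • fderiv ℝ (acgK g) (r • z) := by
    rw [smul_smul, inv_mul_cancel₀ hr.ne', one_smul]
  rw [h3, ← h1, smul_smul]
  congr 1
  field_simp

lemma acgK_fderiv_bound (g : ℝ) (hg : 0 < g) :
    ∃ M, 0 ≤ M ∧ ∀ z : EuclideanSpace ℝ (Fin 3), z ≠ 0 →
      ‖fderiv ℝ (acgK g) z‖ ≤ M / ‖z‖ ^ 2 := by
  have hc : ContinuousOn (fderiv ℝ (acgK g)) (Metric.sphere 0 1) :=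
    (acgK_fderiv_contDiffOn g hg).continuousOn.mono (by
      intro z hz; rintro rfl; simp at hz)
  obtain ⟨M, hM⟩ := (isCompact_sphere _ _).exists_bound_of_continuousOn hc
  refine ⟨max M 0, le_max_right _ _, fun z hz => ?_⟩
  have hn : 0 < ‖z‖ := norm_pos_iff.2 hz
  have he : z = ‖z‖ • (‖z‖⁻¹ • z) := by
    rw [smul_smul, mul_inv_cancel₀ hn.ne', one_smul]
  have hne : ‖z‖⁻¹ • z ≠ 0 := by simp [hz]
  conv_lhs => rw [he]
  rw [acgK_fderiv_hom g hg _ hn _ hne, norm_smul, Real.norm_of_nonneg (by positivity),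
    div_eq_inv_mul]
  gcongr
  refine (hM _ ?_).trans (le_max_left _ _)
  simp [norm_smul, hn.ne']

lemma acgK_five_bound (g : ℝ) (hg : 0 < g) :
    ∃ M, 0 ≤ M ∧ ∀ z : EuclideanSpace ℝ (Fin 3), 1 / 2 ≤ ‖z‖ → ‖z‖ ≤ 3 / 2 →
      ‖iteratedFDeriv ℝ 5 (fderiv ℝ (acgK g)) z‖ ≤ M := by
  have hK : IsCompact (Metric.closedBall (0 : EuclideanSpace ℝ (Fin 3)) (3 / 2)
      ∩ {z | 1 / 2 ≤ ‖z‖}) :=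
    (isCompact_closedBall _ _).inter_right (isClosed_le continuous_const continuous_norm)
  have hc : ContinuousOn (iteratedFDeriv ℝ 5 (fderiv ℝ (acgK g)))
      (Metric.closedBall (0 : EuclideanSpace ℝ (Fin 3)) (3 / 2) ∩ {z | 1 / 2 ≤ ‖z‖}) := by
    intro z hz
    have hz0 : z ≠ 0 := by
      rintro rfl
      have := hz.2
      simp at this
      linarith
    have h := (acgK_contDiffAt g hg z hz0).fderiv_right (m := ∞) (by simp)
    have h5 : (((5 : ℕ) : ℕ∞) : WithTop ℕ∞) < ∞ := WithTop.coe_lt_coe.2 (ENat.natCast_lt_top 5)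
    exact (h.differentiableAt_iteratedFDeriv (m := 5) h5).continuousAt.continuousWithinAt
  obtain ⟨M, hM⟩ := hK.exists_bound_of_continuousOn hc
  exact ⟨max M 0, le_max_right _ _, fun z h1 h2 =>
    (hM z ⟨by simpa using h2, h1⟩).trans (le_max_left _ _)⟩

lemma acg_compact (rho : EuclideanSpace ℝ (Fin 3) → ℝ) (R : ℝ)
    (hsupp : Function.support rho ⊆ Metric.closedBall (0 : EuclideanSpace ℝ (Fin 3)) R) :
    HasCompactSupport rho :=
  HasCompactSupport.of_support_subset_isCompact (isCompact_closedBall _ _) hsupp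

lemma acg_zero (rho : EuclideanSpace ℝ (Fin 3) → ℝ) (R : ℝ)
    (hsupp : Function.support rho ⊆ Metric.closedBall (0 : EuclideanSpace ℝ (Fin 3)) R)
    (y : EuclideanSpace ℝ (Fin 3)) (hy : R < ‖y‖) : rho y = 0 := by
  by_contra h
  have := hsupp h
  simp at this
  linarith

lemma acg_hasFDerivAt (g : ℝ) (hg : 0 < g) (rho : EuclideanSpace ℝ (Fin 3) → ℝ)
    (hrho : Continuous rho) (R : ℝ)
    (hsupp : Function.support rho ⊆ Metric.closedBall (0 : EuclideanSpace ℝ (Fin 3)) R)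
    (x : EuclideanSpace ℝ (Fin 3)) (hx : R < ‖x‖) :
    Integrable (fun y => rho y • fderiv ℝ (acgK g) (x - y)) ∧
    HasFDerivAt (fun x => ∫ y, rho y * acgK g (x - y))
      (∫ y, rho y • fderiv ℝ (acgK g) (x - y)) x := by
  obtain ⟨M, hM0, hM⟩ := acgK_fderiv_bound g hg
  have hs := acg_compact rho R hsupp
  set ε := (‖x‖ - R) / 2 with hε
  have hε0 : 0 < ε := by rw [hε]; linarith
  have hint : Integrable rho := hrho.integrable_of_hasCompactSupport hs
  have hfar : ∀ x' ∈ Metric.ball x ε, ∀ y, rho y ≠ 0 → ε ≤ ‖x' - y‖ := by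
    intro x' hx' y hy
    have h1 : ‖y‖ ≤ R := by simpa using hsupp hy
    have h2 : ‖x - x'‖ < ε := by
      rw [norm_sub_rev]; simpa [dist_eq_norm] using hx'
    have h3 : ‖x‖ ≤ ‖x - x'‖ + ‖x' - y‖ + ‖y‖ := by
      calc ‖x‖ = ‖(x - x') + (x' - y) + y‖ := by congr 1; abel
        _ ≤ _ := norm_add₃_le
    linarith
  have hbd : ∀ x' ∈ Metric.ball x ε, ∀ y,
      ‖rho y • fderiv ℝ (acgK g) (x' - y)‖ ≤ ‖rho y‖ * (M / ε ^ 2) := by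
    intro x' hx' y
    by_cases hy : rho y = 0
    · simp [hy]
    have hd := hfar x' hx' y hy
    rw [norm_smul]
    gcongr
    have hne : x' - y ≠ 0 := by
      rw [← norm_pos_iff]; linarith
    refine (hM _ hne).trans ?_
    gcongr
  have hmeas : AEStronglyMeasurable (fun y => rho y • fderiv ℝ (acgK g) (x - y)) volume := by
    have h1 : Measurable (fun y => fderiv ℝ (acgK g) (x - y)) :=
      (measurable_fderiv ℝ (acgK g)).comp (measurable_const.sub measurable_id)
    exact (hrho.measurable.smul h1).aestronglyMeasurable
  have hbi : Integrable (fun y => ‖rho y‖ * (M / ε ^ 2)) := hint.norm.mul_const _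
  have hxb : x ∈ Metric.ball x ε := Metric.mem_ball_self hε0
  have hmF : ∀ x', AEStronglyMeasurable (fun y => rho y * acgK g (x' - y)) volume := by
    intro x'
    have h1 : Measurable (fun y => acgK g (x' - y)) :=
      (acgK_measurable g).comp (measurable_const.sub measurable_id)
    exact (hrho.measurable.mul h1).aestronglyMeasurable
  refine ⟨hbi.mono' hmeas (Eventually.of_forall (hbd x hxb)), ?_⟩
  refine hasFDerivAt_integral_of_dominated_of_fderiv_le (F := fun x y => rho y * acgK g (x - y))
    (F' := fun x y => rho y • fderiv ℝ (acgK g) (x - y)) (Metric.ball_mem_nhds x hε0)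
    (Eventually.of_forall hmF) ?_ hmeas (Eventually.of_forall fun y x' hx' => hbd x' hx' y)
    hbi (Eventually.of_forall fun y x' hx' => ?_)
  · have hcK : ContinuousOn (fun y => rho y * acgK g (x - y)) (Metric.closedBall 0 R) := by
      intro y hy
      have hne : x - y ≠ 0 := by
        intro h0
        have : x = y := sub_eq_zero.1 h0
        simp [← this] at hy
        linarith
      have h1 : ContinuousAt (fun y => acgK g (x - y)) y :=
        ContinuousAt.comp (f := fun y => x - y) (acgK_contDiffAt g hg _ hne).continuousAt
          (by fun_prop)
      exact (hrho.continuousAt.mul h1).continuousWithinAt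
    have := hcK.integrableOn_compact (μ := volume) (isCompact_closedBall _ _)
    refine (integrableOn_iff_integrable_of_support_subset ?_).1 this
    intro y hy
    exact hsupp (left_ne_zero_of_mul hy)
  · by_cases hy : rho y = 0
    · simpa [hy] using hasFDerivAt_const (0:ℝ) x'
    have hne : x' - y ≠ 0 := by
      rw [← norm_pos_iff]; linarith [hfar x' hx' y hy]
    have h1 := ((acgK_contDiffAt g hg _ hne).differentiableAt (by simp)).hasFDerivAt
    have h2 : HasFDerivAt (fun x => acgK g (x - y)) (fderiv ℝ (acgK g) (x' - y)) x' := by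
      have h3 := HasFDerivAt.comp (f := fun x => x - y) x' h1 ((hasFDerivAt_id x').sub_const y)
      rw [ContinuousLinearMap.comp_id] at h3
      exact h3
    exact h2.const_mul (rho y)

lemma acg_decay (g : ℝ) (hg : 0 < g) (rho : EuclideanSpace ℝ (Fin 3) → ℝ)
    (hrho : Continuous rho) (R : ℝ) (hR : 0 ≤ R)
    (hsupp : Function.support rho ⊆ Metric.closedBall (0 : EuclideanSpace ℝ (Fin 3)) R)
    (hmom : ∀ α : Fin 3 → ℕ, α 0 + α 1 + α 2 ≤ 4 →
      (∫ y : EuclideanSpace ℝ (Fin 3),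
        (y 0) ^ (α 0) * (y 1) ^ (α 1) * (y 2) ^ (α 2) * rho y) = 0) :
    ∃ C : ℝ, ∀ x : EuclideanSpace ℝ (Fin 3), 2 * R + 1 ≤ ‖x‖ →
      ‖∫ y, rho y • fderiv ℝ (acgK g) (x - y)‖ ≤ C / ‖x‖ ^ 7 := by
  obtain ⟨M, hM0, hM⟩ := acgK_five_bound g hg
  have hs := acg_compact rho R hsupp
  have hint : Integrable rho := hrho.integrable_of_hasCompactSupport hs
  refine ⟨(∫ y, ‖rho y‖) * (M * R ^ 5 / 24), fun x hx => ?_⟩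
  have hr : 0 < ‖x‖ := by linarith
  set r := ‖x‖ with hrdef
  set e := r⁻¹ • x with he
  have hen : ‖e‖ = 1 := by
    rw [he, norm_smul, norm_inv, Real.norm_of_nonneg hr.le, ← hrdef, inv_mul_cancel₀ hr.ne']
  have hz : ∀ y : EuclideanSpace ℝ (Fin 3), ‖y‖ ≤ R → ‖(-r⁻¹) • y‖ ≤ R / r ∧ R / r ≤ 1 / 2 := by
    intro y hy
    constructor
    · rw [norm_smul, norm_neg, norm_inv, Real.norm_of_nonneg hr.le, div_eq_inv_mul]
      gcongr
    · rw [div_le_div_iff₀ hr (by norm_num)]; linarith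
  have hxy : ∀ y, x - y = r • (e + (-r⁻¹) • y) := by
    intro y
    rw [he, smul_add, smul_smul, smul_smul, mul_neg, mul_inv_cancel₀ hr.ne', one_smul, neg_smul,
      one_smul, sub_eq_add_neg]
  have hann : ∀ y : EuclideanSpace ℝ (Fin 3), ‖y‖ ≤ R → ∀ t ∈ Icc (0:ℝ) 1, 1 / 2 ≤ ‖e + t • ((-r⁻¹) • y)‖ ∧
      ‖e + t • ((-r⁻¹) • y)‖ ≤ 3 / 2 := by
    intro y hy t ht
    have h1 : ‖t • ((-r⁻¹) • y)‖ ≤ 1 / 2 := by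
      rw [norm_smul, Real.norm_of_nonneg ht.1]
      have := hz y hy
      nlinarith [ht.1, ht.2, norm_nonneg ((-r⁻¹) • y)]
    have h2 := norm_add_le e (t • ((-r⁻¹) • y))
    have h3 := norm_sub_le_norm_add e (t • ((-r⁻¹) • y))
    rw [hen] at h2 h3
    constructor <;> linarith
  set T : EuclideanSpace ℝ (Fin 3) → (EuclideanSpace ℝ (Fin 3) →L[ℝ] ℝ) := fun y =>
    ∑ k ∈ Finset.range 5, ((k ! : ℝ)⁻¹) •
      iteratedFDeriv ℝ k (fderiv ℝ (acgK g)) e (fun _ => (-r⁻¹) • y) with hT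
  have hcT : ∀ k : ℕ, Continuous (fun y : EuclideanSpace ℝ (Fin 3) => ((k ! : ℝ)⁻¹) •
      iteratedFDeriv ℝ k (fderiv ℝ (acgK g)) e (fun _ => (-r⁻¹) • y)) := by
    intro k
    have h1 : Continuous (fun y : EuclideanSpace ℝ (Fin 3) =>
        iteratedFDeriv ℝ k (fderiv ℝ (acgK g)) e (fun _ => (-r⁻¹) • y)) :=
      (iteratedFDeriv ℝ k (fderiv ℝ (acgK g)) e).cont.comp
        (continuous_pi fun _ => continuous_id.const_smul (-r⁻¹))
    exact h1.const_smul ((k ! : ℝ)⁻¹)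
  have hTint : Integrable (fun y => rho y • T y) := by
    refine acg_integrable rho hrho hs _ ?_
    rw [hT]
    exact continuous_finsetSum _ fun k _ => hcT k
  have hT0 : ∫ y, rho y • T y = 0 := by
    simp only [hT, Finset.smul_sum]
    rw [integral_finsetSum]
    · refine Finset.sum_eq_zero fun k hk => ?_
      have hk4 : k ≤ 4 := by have := Finset.mem_range.1 hk; omega
      have := acg_moment rho hrho hs hmom k hk4
        (((k ! : ℝ)⁻¹ * (-r⁻¹) ^ k) • iteratedFDeriv ℝ k (fderiv ℝ (acgK g)) e)
      rw [← this]
      congr 1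
      ext1 y
      congr 1
      have h := (iteratedFDeriv ℝ k (fderiv ℝ (acgK g)) e).map_smul_univ
        (fun _ => -r⁻¹) (fun _ => y)
      rw [h, smul_smul]
      simp
    · intro k _
      exact acg_integrable rho hrho hs _ (hcT k)
  have hDint := (acg_hasFDerivAt g hg rho hrho R hsupp x (by linarith)).1
  have hTint' : Integrable (fun y => rho y • ((r ^ 2)⁻¹ • T y)) := by
    have := hTint.smul ((r ^ 2)⁻¹)
    refine this.congr (Eventually.of_forall fun y => ?_)
    exact smul_comm ((r ^ 2)⁻¹) (rho y) (T y)
  have hT0' : ∫ y, rho y • ((r ^ 2)⁻¹ • T y) = 0 := by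
    simp only [smul_comm (rho _) ((r ^ 2)⁻¹)]
    rw [integral_smul, hT0, smul_zero]
  have heq : ∫ y, rho y • fderiv ℝ (acgK g) (x - y)
      = ∫ y, (rho y • fderiv ℝ (acgK g) (x - y) - rho y • ((r ^ 2)⁻¹ • T y)) := by
    rw [integral_sub hDint hTint', hT0', sub_zero]
  rw [heq]
  have hfin : (∫ y, ‖rho y‖) * (M * R ^ 5 / 24) / r ^ 7
      = ∫ y, ‖rho y‖ * ((r ^ 2)⁻¹ * (M * (R / r) ^ 5 / 24)) := by
    rw [integral_mul_const]
    field_simp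
  rw [hfin]
  refine norm_integral_le_of_norm_le (hint.norm.mul_const _) (Eventually.of_forall fun y => ?_)
  by_cases hy : rho y = 0
  · simp [hy]
  have hyR : ‖y‖ ≤ R := by simpa using hsupp hy
  have hne : ∀ t ∈ Icc (0:ℝ) 1, e + t • ((-r⁻¹) • y) ∈ ({0}ᶜ : Set (EuclideanSpace ℝ (Fin 3))) := by
    intro t ht
    have := (hann y hyR t ht).1
    rw [mem_compl_singleton_iff, ← norm_pos_iff]
    linarith
  have htay := acg_taylor (fderiv ℝ (acgK g)) {0}ᶜ isOpen_compl_singleton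
    (acgK_fderiv_contDiffOn g hg) e ((-r⁻¹) • y) hne M
    (fun t ht => hM _ (hann y hyR t ht).1 (hann y hyR t ht).2)
  have hne1 : e + (-r⁻¹) • y ≠ 0 := by simpa using hne 1 (by simp)
  rw [hxy y, acgK_fderiv_hom g hg r hr _ hne1, ← smul_sub, ← smul_sub, norm_smul, norm_smul,
    Real.norm_of_nonneg (show 0 ≤ (r ^ 2)⁻¹ by positivity)]
  gcongr
  refine htay.trans ?_
  gcongr
  exact (hz y hyR).1

end helpers



/-- Decay `‖∇u(x)‖ ≤ C |x|^{-7}` of the gradient of the anisotropic Coulomb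
potential of a compactly supported continuous density whose moments up to
order `4` vanish. -/
theorem anisotropic_coulomb_gradient_decay_seven (rho : EuclideanSpace ℝ (Fin 3) → ℝ)
    (hrho : Continuous rho) (R : ℝ)
    (hsupp : Function.support rho ⊆ Metric.closedBall (0 : EuclideanSpace ℝ (Fin 3)) R)
    (hmom : ∀ α : Fin 3 → ℕ, α 0 + α 1 + α 2 ≤ 4 →
      (∫ y : EuclideanSpace ℝ (Fin 3),
        (y 0) ^ (α 0) * (y 1) ^ (α 1) * (y 2) ^ (α 2) * rho y) = 0)
    (v : ℝ) (hv0 : 0 ≤ v) (hv1 : v < 1)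
    (u : EuclideanSpace ℝ (Fin 3) → ℝ)
    (hu : ∀ x : EuclideanSpace ℝ (Fin 3),
      u x = ((1 / Real.sqrt (1 - v ^ 2)) / (4 * Real.pi)) *
        ∫ y : EuclideanSpace ℝ (Fin 3), rho y /
          Real.sqrt ((1 / Real.sqrt (1 - v ^ 2)) ^ 2 * (x 0 - y 0) ^ 2
            + (x 1 - y 1) ^ 2 + (x 2 - y 2) ^ 2)) :
    (∀ x : EuclideanSpace ℝ (Fin 3), R < ‖x‖ → DifferentiableAt ℝ u x) ∧
    ∃ C : ℝ, ∀ x : EuclideanSpace ℝ (Fin 3), 2 * R + 1 ≤ ‖x‖ →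
      ‖fderiv ℝ u x‖ ≤ C / ‖x‖ ^ 7 := by
  have hv : 0 < 1 - v ^ 2 := by nlinarith
  have hg : 0 < 1 / Real.sqrt (1 - v ^ 2) := by
    have := Real.sqrt_pos.2 hv
    positivity
  set g := 1 / Real.sqrt (1 - v ^ 2) with hgdef
  have hu' : u = fun x => (g / (4 * Real.pi)) * ∫ y, rho y * acgK g (x - y) := by
    ext x
    rw [hu x]
    congr 2
    ext y
    simp [acgK, div_eq_mul_inv]
  have hder : ∀ x : EuclideanSpace ℝ (Fin 3), R < ‖x‖ → HasFDerivAt u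
      ((g / (4 * Real.pi)) • ∫ y, rho y • fderiv ℝ (acgK g) (x - y)) x := by
    intro x hx
    rw [hu']
    exact (acg_hasFDerivAt g hg rho hrho R hsupp x hx).2.const_mul _
  refine ⟨fun x hx => (hder x hx).differentiableAt, ?_⟩
  by_cases hR : 0 ≤ R
  · obtain ⟨C, hC⟩ := acg_decay g hg rho hrho R hR hsupp hmom
    refine ⟨(g / (4 * Real.pi)) * C, fun x hx => ?_⟩
    have hpi := Real.pi_pos
    rw [(hder x (by linarith)).fderiv, norm_smul,
      Real.norm_of_nonneg (show 0 ≤ g / (4 * Real.pi) by positivity), mul_div_assoc]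
    gcongr
    exact hC x hx
  · refine ⟨0, fun x _ => ?_⟩
    push Not at hR
    have h0 : ∀ y, rho y = 0 := fun y =>
      acg_zero rho R hsupp y (lt_of_lt_of_le hR (norm_nonneg y))
    have : u = fun _ => 0 := by
      rw [hu']; ext x; simp [h0]
    simp [this]
end

section
/- For every k = (k₁, k₂, k₃) ∈ ℝ³ and every real v with 0 ≤ v < 1, writing |k|² = k₁² + k₂² + k₃², one has |k|⁶·(1 + v²) + |k|⁴·k₁²·(1 + 3v⁴ − 8v²) + |k|²·k₁⁴·v²·(3 − v²) ≥ 0. -/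
/-- The pointwise polynomial inequality
`|k|⁶(1+v²) + |k|⁴k₁²(1+3v⁴-8v²) + |k|²k₁⁴v²(3-v²) ≥ 0` for `0 ≤ v < 1`. -/
theorem key_polynomial_nonneg (k : Fin 3 → ℝ) (v : ℝ) (hv0 : 0 ≤ v) (hv1 : v < 1) :
    0 ≤ ((k 0) ^ 2 + (k 1) ^ 2 + (k 2) ^ 2) ^ 3 * (1 + v ^ 2)
      + ((k 0) ^ 2 + (k 1) ^ 2 + (k 2) ^ 2) ^ 2 * (k 0) ^ 2 * (1 + 3 * v ^ 4 - 8 * v ^ 2)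
      + ((k 0) ^ 2 + (k 1) ^ 2 + (k 2) ^ 2) * (k 0) ^ 4 * v ^ 2 * (3 - v ^ 2) := by
  have key : ((k 0) ^ 2 + (k 1) ^ 2 + (k 2) ^ 2) ^ 3 * (1 + v ^ 2)
      + ((k 0) ^ 2 + (k 1) ^ 2 + (k 2) ^ 2) ^ 2 * (k 0) ^ 2 * (1 + 3 * v ^ 4 - 8 * v ^ 2)
      + ((k 0) ^ 2 + (k 1) ^ 2 + (k 2) ^ 2) * (k 0) ^ 4 * v ^ 2 * (3 - v ^ 2)
      = ((k 0) ^ 2 + (k 1) ^ 2 + (k 2) ^ 2) *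
        (2 * (1 - v ^ 2) ^ 2 * (k 0) ^ 4
          + 3 * (1 - v ^ 2) ^ 2 * (k 0) ^ 2 * ((k 1) ^ 2 + (k 2) ^ 2)
          + (1 + v ^ 2) * ((k 1) ^ 2 + (k 2) ^ 2) ^ 2) := by
    ring
  rw [key]
  positivity
end
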